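/- arXiv:math/9705223 — 4 statements merged into one kernel-verified Lean document; each statement's English description precedes it below -/
import Mathlib

section
/- Let n \ge 2 and let a, b be integers with 0 \le a \le b. Set s := (2n+1)a + 1 if both a and b are odd, and s := (2n+1)a otherwise. If P and Q are polynomials in \mathbb{Q}[X] such that P(q) = N_{BC}(n,q,-a,b) for all sufficiently large odd integers q and Q(q) = N_{BC}(n,q,0,b-a) for all sufficiently large odd integers q, then P(X) = Q(X - s) as polynomials. -/
open Polynomial

/-- `x` avoids the integer interval `[u, v]` in `ZMod q`. -/
def Avoids {q : ℕ} (x : ZMod q) (u v : ℤ) : Prop :=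
  ∀ k : ℤ, u ≤ k → k ≤ v → x ≠ (k : ZMod q)

/-- Count for the type `B` deformation: `x_i`, `x_i - x_j` and `x_i + x_j`
all avoid `[u, v]`. -/
noncomputable def N_B (n q : ℕ) (u v : ℤ) : ℕ :=
  Set.ncard {x : Fin n → ZMod q |
    (∀ i, Avoids (x i) u v) ∧
    ∀ i j : Fin n, i < j → Avoids (x i - x j) u v ∧ Avoids (x i + x j) u v}

/-- Count for the type `C` deformation: `2x_i`, `x_i - x_j` and `x_i + x_j`
all avoid `[u, v]`. -/
noncomputable def N_C (n q : ℕ) (u v : ℤ) : ℕ :=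
  Set.ncard {x : Fin n → ZMod q |
    (∀ i, Avoids (2 * x i) u v) ∧
    ∀ i j : Fin n, i < j → Avoids (x i - x j) u v ∧ Avoids (x i + x j) u v}

/-- Count for the type `BC` deformation: `x_i`, `2x_i`, `x_i - x_j` and `x_i + x_j`
all avoid `[u, v]`. -/
noncomputable def N_BC (n q : ℕ) (u v : ℤ) : ℕ :=
  Set.ncard {x : Fin n → ZMod q |
    (∀ i, Avoids (x i) u v ∧ Avoids (2 * x i) u v) ∧
    ∀ i j : Fin n, i < j → Avoids (x i - x j) u v ∧ Avoids (x i + x j) u v}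

/-- Count for the type `D` deformation: `x_i - x_j` and `x_i + x_j`
avoid `[u, v]`. -/
noncomputable def N_D (n q : ℕ) (u v : ℤ) : ℕ :=
  Set.ncard {x : Fin n → ZMod q |
    ∀ i j : Fin n, i < j → Avoids (x i - x j) u v ∧ Avoids (x i + x j) u v}

/-- `1 + y + y^2 + ... + y^(m-1)`. -/
noncomputable def phi (m : ℕ) : ℚ[X] := ∑ i ∈ Finset.range m, X ^ i

/-- `1 + y^2 + y^4 + ... + y^(2(m-1))`. -/
noncomputable def phi2 (m : ℕ) : ℚ[X] := ∑ i ∈ Finset.range m, X ^ (2 * i)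

/-- For `g = ∑_k g_k y^k`, the sum `∑_k g_k (q - k)^n`. -/
noncomputable def polysum (g : ℚ[X]) (q n : ℕ) : ℚ :=
  ∑ k ∈ Finset.range (g.natDegree + 1), g.coeff k * ((q : ℚ) - (k : ℚ)) ^ n


namespace BCproof

/-- signed orderings -/
abbrev W (n : ℕ) := Equiv.Perm (Fin n) × (Fin n → Bool)

/-- the elements `0, ± i` -/
abbrev E (n : ℕ) := Option (Fin n × Bool)

def lab {n : ℕ} : E n → ℤ
  | none => 0
  | some (i, true) => (n : ℤ) - (i : ℕ)
  | some (i, false) => -((n : ℤ) - (i : ℕ))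

def val {n q : ℕ} (x : Fin n → ZMod q) : E n → ZMod q
  | none => 0
  | some (i, true) => x i
  | some (i, false) => - x i

def eneg {n : ℕ} : E n → E n
  | none => none
  | some (i, e) => some (i, !e)

def el {n : ℕ} (w : W n) : ℕ → E n
  | 0 => none
  | j + 1 => if h : j < n then some (w.1 ⟨j, h⟩, w.2 (w.1 ⟨j, h⟩)) else none

def el2 {n : ℕ} (w : W n) (s : ℕ) : E n :=
  if s ≤ n then el w s else eneg (el w (2 * n + 1 - s))

def ZZ (n q : ℕ) (P : ℕ → ℤ) (s : ℕ) : ℤ :=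
  if s ≤ n then P s else (q : ℤ) - P (2 * n + 1 - s)

def thr (α β : ℤ) (l l' : ℤ) : ℤ := if l < l' then β else α

def Good (n q : ℕ) (u v : ℤ) : Set (Fin n → ZMod q) :=
  {x : Fin n → ZMod q |
    (∀ i, Avoids (x i) u v ∧ Avoids (2 * x i) u v) ∧
    ∀ i j : Fin n, i < j → Avoids (x i - x j) u v ∧ Avoids (x i + x j) u v}

lemma lab_neg {n : ℕ} (u : E n) : lab (eneg u) = - lab u := by
  rcases u with _ | ⟨i, _ | _⟩ <;> simp [lab, eneg]

lemma val_neg {n q : ℕ} (x : Fin n → ZMod q) (u : E n) : val x (eneg u) = - val x u := by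
  rcases u with _ | ⟨i, _ | _⟩ <;> simp [val, eneg]

lemma lab_inj {n : ℕ} {u v : E n} (h : lab u = lab v) : u = v := by
  rcases u with _ | ⟨i, _ | _⟩ <;> rcases v with _ | ⟨j, _ | _⟩ <;> simp [lab, Fin.ext_iff] at h ⊢ <;>
    omega

lemma good_iff {n q : ℕ} {u v : ℤ} (x : Fin n → ZMod q) :
    x ∈ Good n q u v ↔ ∀ e f : E n, lab f < lab e → Avoids (val x e - val x f) u v := by
  constructor
  · rintro ⟨h1, h2⟩ e f hl
    rcases e with _ | ⟨i, _ | _⟩ <;> rcases f with _ | ⟨j, _ | _⟩ <;> simp [lab, val] at hl ⊢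
    · exact (h1 j).1
    · omega
    · omega
    · have := (h2 j i (by omega)).1
      rwa [show -x i + x j = x j - x i by ring]
    · omega
    · exact (h1 i).1
    · rcases lt_trichotomy i j with h | h | h
      · exact (h2 i j h).2
      · subst h
        rw [← two_mul]; exact (h1 i).2
      · rw [add_comm]; exact (h2 j i h).2
    · exact (h2 i j (by omega)).1
  · intro h
    refine ⟨fun i => ⟨?_, ?_⟩, fun i j hij => ⟨?_, ?_⟩⟩
    · simpa [val] using h (some (i, true)) none (by simp [lab])
    · have := h (some (i, true)) (some (i, false)) (by simp [lab]; omega)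
      simp only [val] at this
      rwa [show x i - -x i = 2 * x i by ring] at this
    · exact h (some (i, true)) (some (j, true)) (by simp [lab]; omega)
    · have := h (some (i, true)) (some (j, false)) (by simp [lab]; omega)
      simpa [val] using this

lemma thr_tri {α β : ℤ} (h0 : 0 ≤ α) (h1 : α ≤ β) (x y z : ℤ) :
    thr α β x z ≤ thr α β x y + thr α β y z := by
  unfold thr; split_ifs <;> omega

lemma thr_neg (α β x y : ℤ) : thr α β (-x) (-y) = thr α β y x := by
  unfold thr; split_ifs <;> omega

lemma chain {α β : ℤ} (h0 : 0 ≤ α) (h1 : α ≤ β) (l Z : ℕ → ℤ) (N : ℕ)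
    (h : ∀ s < N, Z s + thr α β (l s) (l (s + 1)) ≤ Z (s + 1)) (i j : ℕ) (hij : i < j)
    (hj : j ≤ N) : Z i + thr α β (l i) (l j) ≤ Z j := by
  induction j, hij using Nat.le_induction with
  | base => exact h i (by omega)
  | succ j hij ih =>
    have := ih (by omega)
    have h2 := h j (by omega)
    have := thr_tri h0 h1 (l i) (l j) (l (j + 1))
    omega

structure Cfg {n : ℕ} (q : ℕ) (α β : ℤ) (w : W n) (P : ℕ → ℤ) : Prop where
  zero : P 0 = 0
  step : ∀ j < n, P j + thr α β (lab (el w j)) (lab (el w (j + 1))) ≤ P (j + 1)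
  last : 2 * P n + thr α β (lab (el w n)) (- lab (el w n)) ≤ q

lemma cfg2 {n q : ℕ} {α β : ℤ} {w : W n} {P : ℕ → ℤ} (h : Cfg q α β w P) (s : ℕ)
    (hs : s < 2 * n + 1) :
    ZZ n q P s + thr α β (lab (el2 w s)) (lab (el2 w (s + 1))) ≤ ZZ n q P (s + 1) := by
  unfold ZZ el2
  rcases lt_trichotomy s n with h1 | h1 | h1
  · rw [if_pos h1.le, if_pos h1.le, if_pos (by omega), if_pos (by omega)]
    exact h.step s h1
  · subst h1
    rw [if_pos le_rfl, if_pos le_rfl, if_neg (by omega), if_neg (by omega), lab_neg,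
      show 2 * s + 1 - (s + 1) = s by omega]
    have := h.last
    omega
  · obtain ⟨j, rfl⟩ : ∃ j, s = 2 * n + 1 - (j + 1) := ⟨2 * n - s, by omega⟩
    rw [if_neg (by omega), if_neg (by omega), if_neg (by omega), if_neg (by omega), lab_neg,
      lab_neg, thr_neg, show 2 * n + 1 - (2 * n + 1 - (j + 1)) = j + 1 by omega,
      show 2 * n + 1 - (2 * n + 1 - (j + 1) + 1) = j by omega]
    have := h.step j (by omega)
    omega

lemma el2_top {n : ℕ} (w : W n) : el2 w (2 * n + 1) = none := by
  simp [el2, el, eneg]; omega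

lemma el2_zero {n : ℕ} (w : W n) : el2 w 0 = none := by
  simp [el2, el]

lemma el2_surj {n : ℕ} (w : W n) (u : E n) : ∃ s ≤ 2 * n, el2 w s = u := by
  rcases u with _ | ⟨i, e⟩
  · exact ⟨0, by omega, el2_zero w⟩
  · have hj := (w.1.symm i).2
    by_cases he : w.2 i = e
    · refine ⟨(w.1.symm i : ℕ) + 1, by omega, ?_⟩
      rw [el2, if_pos (by omega)]
      simp [el, he]
    · refine ⟨2 * n + 1 - ((w.1.symm i : ℕ) + 1), by omega, ?_⟩
      rw [el2, if_neg (by omega),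
        show 2 * n + 1 - (2 * n + 1 - ((w.1.symm i : ℕ) + 1)) = (w.1.symm i : ℕ) + 1 by omega]
      simp [el, eneg]
      revert he; cases w.2 i <;> cases e <;> simp

lemma val_el2 {n q : ℕ} (w : W n) (P : ℕ → ℤ) (x : Fin n → ZMod q)
    (hx : ∀ j ≤ n, ((P j : ℤ) : ZMod q) = val x (el w j)) (s : ℕ) (hs : s ≤ 2 * n + 1) :
    ((ZZ n q P s : ℤ) : ZMod q) = val x (el2 w s) := by
  unfold ZZ el2
  split_ifs with h
  · exact hx s h
  · push_cast
    rw [val_neg, ← hx _ (by omega)]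
    simp

lemma avoids_of {q : ℕ} {α β z : ℤ} (h1 : β ≤ z) (h2 : z + α ≤ q) :
    Avoids (z : ZMod q) (1 - α) (β - 1) := by
  intro k hk1 hk2 h
  rw [ZMod.intCast_eq_intCast_iff_dvd_sub] at h
  have := Int.le_of_dvd (by omega) ((dvd_neg).2 h)
  omega

lemma of_avoids {q : ℕ} {α β z : ℤ} (hα : 1 ≤ α) (hβ : 1 ≤ β) (h1 : 0 ≤ z) (h2 : z ≤ q)
    (h : Avoids (z : ZMod q) (1 - α) (β - 1)) : β ≤ z ∧ z + α ≤ q := by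
  constructor
  · by_contra hc
    exact h z (by omega) (by omega) rfl
  · by_contra hc
    exact h (z - q) (by omega) (by omega) (by simp)

lemma cfg_good {n q : ℕ} {α β : ℤ} (h0 : 0 ≤ α) (h1 : α ≤ β) {w : W n} {P : ℕ → ℤ}
    (h : Cfg q α β w P) (x : Fin n → ZMod q)
    (hx : ∀ j ≤ n, ((P j : ℤ) : ZMod q) = val x (el w j)) :
    x ∈ Good n q (1 - α) (β - 1) := by
  rw [good_iff]
  intro e f hl
  obtain ⟨s, hs, rfl⟩ := el2_surj w e
  obtain ⟨t, ht, rfl⟩ := el2_surj w f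
  rw [← val_el2 w P x hx s (by omega), ← val_el2 w P x hx t (by omega)]
  have key := chain h0 h1 (fun s => lab (el2 w s)) (ZZ n q P) (2 * n + 1) (cfg2 h)
  have hZ0 : ZZ n q P 0 = 0 := by simp [ZZ, h.zero]
  have hZ1 : ZZ n q P (2 * n + 1) = q := by
    rw [ZZ, if_neg (by omega)]; simp [h.zero]
  have round : ∀ i j, i < j → j ≤ 2 * n →
      ZZ n q P j - ZZ n q P i + thr α β (lab (el2 w j)) (lab (el2 w i)) ≤ q := by
    intro i j hij hj
    have a1 := key j (2 * n + 1) (by omega) le_rfl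
    rw [hZ1] at a1
    simp only [el2_top] at a1
    rcases Nat.eq_zero_or_pos i with rfl | hi
    · rw [el2_zero]; omega
    · have a2 := key 0 i hi (by omega)
      rw [hZ0] at a2
      simp only [el2_zero] at a2
      have := thr_tri h0 h1 (lab (el2 w j)) (lab (none : E n)) (lab (el2 w i))
      omega
  rcases lt_trichotomy s t with hst | rfl | hst
  · have a1 := round s t hst ht
    have a2 := key s t hst (by omega)
    simp only [thr] at a1 a2
    rw [if_pos hl] at a1
    rw [if_neg (by omega)] at a2
    have : Avoids (((q : ℤ) + ZZ n q P s - ZZ n q P t : ℤ) : ZMod q) (1 - α) (β - 1) :=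
      avoids_of (by omega) (by omega)
    simpa using this
  · omega
  · have a1 := round t s hst hs
    have a2 := key t s hst (by omega)
    simp only [thr] at a1 a2
    rw [if_neg (by omega)] at a1
    rw [if_pos hl] at a2
    have : Avoids ((ZZ n q P s - ZZ n q P t : ℤ) : ZMod q) (1 - α) (β - 1) :=
      avoids_of (by omega) (by omega)
    simpa using this

/-- a single gap of a good configuration -/
lemma gap_of_good {n q : ℕ} {α β : ℤ} (hα : 1 ≤ α) (hβ : 1 ≤ β) {x : Fin n → ZMod q}
    (hx : x ∈ Good n q (1 - α) (β - 1)) (e f : E n) (hef : e ≠ f) (y z : ℤ)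
    (hy : (y : ZMod q) = val x e) (hz : (z : ZMod q) = val x f) (h1 : y ≤ z) (h2 : z ≤ y + q) :
    y + thr α β (lab e) (lab f) ≤ z := by
  rw [good_iff] at hx
  unfold thr
  split_ifs with h
  · have := hx f e h
    rw [← hy, ← hz] at this
    have := of_avoids (q := q) (z := z - y) hα hβ (by omega) (by omega) (by simpa using this)
    omega
  · have h' : lab f < lab e := lt_of_le_of_ne (not_lt.1 h) (fun h => hef (lab_inj h).symm)
    have := hx e f h'
    rw [← hy, ← hz] at this
    have := of_avoids (q := q) (z := q + y - z) hα hβ (by omega) (by omega) (by simpa using this)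
    omega

end BCproof

namespace BCproof

def sgn {n q : ℕ} (x : Fin n → ZMod q) (i : Fin n) : Bool := decide (0 < (x i).valMinAbs)

def key {n q : ℕ} (x : Fin n → ZMod q) (i : Fin n) : ℤ ×ₗ ℤ :=
  toLex (|(x i).valMinAbs|, - lab (some (i, sgn x i) : E n))

def Sorted {n q : ℕ} (x : Fin n → ZMod q) (w : W n) : Prop :=
  w.2 = sgn x ∧ Monotone (key x ∘ w.1)

lemma key_inj {n q : ℕ} (x : Fin n → ZMod q) : Function.Injective (key x) := by
  intro i j h
  have h2 : - lab (some (i, sgn x i) : E n) = - lab (some (j, sgn x j) : E n) :=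
    congrArg (fun z => (ofLex z).2) h
  have := lab_inj (neg_injective h2)
  simp at this
  exact this.1

lemma sorted_unique {n q : ℕ} {x : Fin n → ZMod q} {w w' : W n} (h : Sorted x w)
    (h' : Sorted x w') : w = w' := by
  have h1 := Tuple.unique_monotone h.2 h'.2
  refine Prod.ext ?_ (h.1.trans h'.1.symm)
  ext i
  have := key_inj x (congrFun h1 i)
  rw [this]

lemma sorted_exists {n q : ℕ} (x : Fin n → ZMod q) : ∃ w, Sorted x w :=
  ⟨(Tuple.sort (key x), sgn x), rfl, Tuple.monotone_sort _⟩

def mkx {n : ℕ} (q : ℕ) (w : W n) (P : ℕ → ℤ) (i : Fin n) : ZMod q :=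
  ((if w.2 i then P ((w.1.symm i : ℕ) + 1) else - P ((w.1.symm i : ℕ) + 1) : ℤ) : ZMod q)

lemma mkx_apply {n : ℕ} (q : ℕ) (w : W n) (P : ℕ → ℤ) (j : Fin n) :
    mkx q w P (w.1 j) = ((if w.2 (w.1 j) then P (j + 1) else - P (j + 1) : ℤ) : ZMod q) := by
  simp [mkx]

lemma el_succ {n : ℕ} (w : W n) (j : Fin n) : el w (j + 1) = some (w.1 j, w.2 (w.1 j)) := by
  simp [el]

lemma mkx_val {n q : ℕ} (w : W n) (P : ℕ → ℤ) (h0 : P 0 = 0) (j : ℕ) (hj : j ≤ n) :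
    ((P j : ℤ) : ZMod q) = val (mkx q w P) (el w j) := by
  rcases j with _ | j
  · simp [h0, el, val]
  · have := el_succ w ⟨j, hj⟩
    simp only at this
    rw [this]
    have h2 := mkx_apply q w P ⟨j, hj⟩
    cases h : w.2 (w.1 ⟨j, hj⟩) <;> simp [val, h2, h]

lemma lab_pos {n : ℕ} (i : Fin n) : 0 < lab (some (i, true) : E n) := by
  simp [lab]

lemma lab_lt {n : ℕ} (i : Fin n) : lab (some (i, false) : E n) < 0 := by
  simp [lab]

lemma cfg_vma {n q : ℕ} {α β : ℤ} (h0 : 0 ≤ α) (h1 : α ≤ β) (hβ : 1 ≤ β) (hq : 0 < q)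
    {w : W n} {P : ℕ → ℤ} (h : Cfg q α β w P) (j : Fin n) :
    (mkx q w P (w.1 j)).valMinAbs = (if w.2 (w.1 j) then P (j + 1) else - P (j + 1)) ∧
    0 ≤ P (j + 1) ∧ sgn (mkx q w P) (w.1 j) = w.2 (w.1 j) := by
  have : NeZero q := ⟨hq.ne'⟩
  have ch := chain h0 h1 (fun s => lab (el2 w s)) (ZZ n q P) (2 * n + 1) (cfg2 h)
  have hj := j.2
  have a1 := ch 0 (j + 1) (by omega) (by omega)
  have a2 := ch (j + 1) (2 * n + 1 - (j + 1)) (by omega) (by omega)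
  simp only [ZZ, el2] at a1 a2
  rw [if_pos (by omega), if_pos (by omega), if_pos (by omega), if_pos (by omega), h.zero,
    el_succ] at a1
  rw [if_pos (by omega), if_pos (by omega), if_neg (by omega), if_neg (by omega), lab_neg,
    show 2 * n + 1 - (2 * n + 1 - ((j : ℕ) + 1)) = j + 1 by omega, el_succ] at a2
  have hel : lab (el w 0) = 0 := rfl
  rw [hel] at a1
  have hv : (mkx q w P (w.1 j)).valMinAbs = (if w.2 (w.1 j) then P (j + 1) else - P (j + 1)) := by
    rw [ZMod.valMinAbs_spec]
    refine ⟨mkx_apply q w P j, ?_⟩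
    cases hw : w.2 (w.1 j)
    · rw [hw] at a1 a2
      have := lab_lt (w.1 j)
      simp only [thr] at a1 a2
      rw [if_neg (by omega)] at a1
      rw [if_pos (by omega)] at a2
      simp only [Bool.false_eq_true, if_false, Set.mem_Ioc]
      omega
    · rw [hw] at a1 a2
      have := lab_pos (w.1 j)
      simp only [thr] at a1 a2
      rw [if_pos (by omega)] at a1
      rw [if_neg (by omega)] at a2
      simp only [if_true, Set.mem_Ioc]
      omega
  have hP : 0 ≤ P (j + 1) := by
    unfold thr at a1; split_ifs at a1 <;> omega
  refine ⟨hv, hP, ?_⟩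
  rw [sgn, hv]
  cases hw : w.2 (w.1 j)
  · simpa using hP
  · rw [hw] at a1
    have := lab_pos (w.1 j)
    simp only [thr] at a1
    rw [if_pos (by omega)] at a1
    simp; omega

lemma cfg_sorted {n q : ℕ} {α β : ℤ} (h0 : 0 ≤ α) (h1 : α ≤ β) (hβ : 1 ≤ β) (hq : 0 < q)
    {w : W n} {P : ℕ → ℤ} (h : Cfg q α β w P) :
    Sorted (mkx q w P) w ∧ ∀ j : Fin n, |(mkx q w P (w.1 j)).valMinAbs| = P (j + 1) := by
  have hv := cfg_vma h0 h1 hβ hq h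
  have habs : ∀ j : Fin n, |(mkx q w P (w.1 j)).valMinAbs| = P (j + 1) := by
    intro j
    obtain ⟨a, b, -⟩ := hv j
    rw [a]
    split_ifs
    · exact abs_of_nonneg b
    · rw [abs_neg]; exact abs_of_nonneg b
  refine ⟨⟨?_, ?_⟩, habs⟩
  · ext i
    have := (hv (w.1.symm i)).2.2
    simp at this
    simp [this]
  · intro i j hij
    rcases hij.eq_or_lt with rfl | hij
    · exact le_rfl
    have ch := chain h0 h1 (fun s => lab (el w s)) P n h.step (i + 1) (j + 1) (by simpa using hij)
      (by omega)
    simp only [el_succ] at ch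
    simp only [Function.comp, key, habs, (hv _).2.2]
    rw [Prod.Lex.toLex_le_toLex]
    unfold thr at ch
    simp only
    split_ifs at ch <;> omega

def Pof {n q : ℕ} (x : Fin n → ZMod q) (w : W n) : ℕ → ℤ
  | 0 => 0
  | j + 1 => if h : j < n then |(x (w.1 ⟨j, h⟩)).valMinAbs| else 0

lemma Pof_succ {n q : ℕ} (x : Fin n → ZMod q) (w : W n) (j : Fin n) :
    Pof x w (j + 1) = |(x (w.1 j)).valMinAbs| := by simp [Pof]

lemma mkx_Pof {n q : ℕ} (x : Fin n → ZMod q) (w : W n) (hw : Sorted x w) :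
    mkx q w (Pof x w) = x := by
  ext i
  obtain ⟨j, rfl⟩ := w.1.surjective i
  rw [mkx_apply, Pof_succ, hw.1, sgn]
  have := (x (w.1 j)).coe_valMinAbs
  by_cases h : 0 < (x (w.1 j)).valMinAbs
  · simp [h, abs_of_pos h]
  · simp [h, abs_of_nonpos (not_lt.1 h)]

lemma Pof_bd {n q : ℕ} (hq : 0 < q) (x : Fin n → ZMod q) (w : W n) (j : ℕ) :
    0 ≤ Pof x w j ∧ 2 * Pof x w j ≤ q := by
  have : NeZero q := ⟨hq.ne'⟩
  rcases j with _ | j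
  · simp [Pof]
  · simp only [Pof]
    split_ifs with h
    · have := (x (w.1 ⟨j, h⟩)).valMinAbs_mem_Ioc
      simp only [Set.mem_Ioc] at this
      refine ⟨abs_nonneg _, ?_⟩
      rcases abs_cases (x (w.1 ⟨j, h⟩)).valMinAbs <;> omega
    · simp

lemma Pof_mono {n q : ℕ} (hq : 0 < q) (x : Fin n → ZMod q) (w : W n) (hw : Sorted x w)
    (j : ℕ) (hj : j < n) : Pof x w j ≤ Pof x w (j + 1) ∧
      (lab (el w j) < lab (el w (j + 1)) → Pof x w j < Pof x w (j + 1)) := by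
  rcases j with _ | j
  · refine ⟨(Pof_bd hq x w 1).1, ?_⟩
    have := Pof_succ x w ⟨0, hj⟩
    have h2 := el_succ w ⟨0, hj⟩
    simp only at this h2
    rw [this, h2, hw.1]
    intro h
    change 0 < _ at h
    change 0 < _
    rw [abs_pos]
    intro h3
    have h4 : sgn x (w.1 ⟨0, hj⟩) = false := by simp [sgn, h3]
    rw [h4] at h
    have := lab_lt (w.1 ⟨0, hj⟩)
    omega
  · have a1 := Pof_succ x w ⟨j, by omega⟩
    have a2 := el_succ w ⟨j, by omega⟩
    have b1 := Pof_succ x w ⟨j + 1, by omega⟩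
    have b2 := el_succ w ⟨j + 1, by omega⟩
    simp only at a1 a2 b1 b2
    have := hw.2 (show (⟨j, by omega⟩ : Fin n) ≤ ⟨j + 1, by omega⟩ by simp)
    simp only [Function.comp, key] at this
    rw [Prod.Lex.toLex_le_toLex] at this
    simp only at this
    rw [a1, a2, b1, b2, hw.1]
    omega

lemma Pof_last {n q : ℕ} (hq : 0 < q) (x : Fin n → ZMod q) (w : W n) (hw : Sorted x w)
    (h : lab (el w n) < 0) : 2 * Pof x w n < q := by
  have : NeZero q := ⟨hq.ne'⟩
  rcases n with _ | n
  · simp [Pof]; omega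
  have a1 := Pof_succ x w ⟨n, by omega⟩
  have a2 := el_succ w ⟨n, by omega⟩
  simp only at a1 a2
  rw [a1]
  rw [a2, hw.1] at h
  have hs : ¬ 0 < (x (w.1 ⟨n, by omega⟩)).valMinAbs := by
    intro h3
    have h4 : sgn x (w.1 ⟨n, by omega⟩) = true := by simp [sgn, h3]
    rw [h4] at h
    have := lab_pos (w.1 ⟨n, by omega⟩)
    omega
  have := (x (w.1 ⟨n, by omega⟩)).valMinAbs_mem_Ioc
  simp only [Set.mem_Ioc] at this
  rw [abs_of_nonpos (not_lt.1 hs)]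
  omega

lemma el_ne {n : ℕ} (w : W n) (j : ℕ) (hj : j < n) : el w j ≠ el w (j + 1) := by
  have b2 := el_succ w ⟨j, hj⟩
  simp only at b2
  rw [b2]
  rcases j with _ | j
  · simp [el]
  · have a2 := el_succ w ⟨j, by omega⟩
    simp only at a2
    rw [a2]
    simp

lemma sorted_cfg {n q : ℕ} (hn : 0 < n) {α β : ℤ} (hαβ : (1 ≤ α ∧ 1 ≤ β) ∨ (α = 0 ∧ β = 1))
    (hq : 0 < q) {x : Fin n → ZMod q} (hx : x ∈ Good n q (1 - α) (β - 1)) {w : W n}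
    (hw : Sorted x w) : Cfg q α β w (Pof x w) := by
  refine ⟨rfl, fun j hj => ?_, ?_⟩
  · have m := Pof_mono hq x w hw j hj
    rcases hαβ with ⟨hα, hβ⟩ | ⟨rfl, rfl⟩
    · have v1 := mkx_val (q := q) w (Pof x w) rfl j hj.le
      have v2 := mkx_val (q := q) w (Pof x w) rfl (j + 1) hj
      rw [mkx_Pof x w hw] at v1 v2
      have := Pof_bd hq x w j
      have := Pof_bd hq x w (j + 1)
      exact gap_of_good hα hβ hx _ _ (el_ne w j hj) _ _ v1 v2 m.1 (by omega)
    · unfold thr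
      split_ifs with h
      · have := m.2 h; omega
      · omega
  · have hb := Pof_bd hq x w n
    rcases hαβ with ⟨hα, hβ⟩ | ⟨rfl, rfl⟩
    · have v1 := mkx_val (q := q) w (Pof x w) rfl n le_rfl
      rw [mkx_Pof x w hw] at v1
      have v2 : (((q : ℤ) - Pof x w n : ℤ) : ZMod q) = val x (eneg (el w n)) := by
        rw [val_neg, ← v1]; simp
      have hne : el w n ≠ eneg (el w n) := by
        obtain ⟨n, rfl⟩ : ∃ m, n = m + 1 := ⟨n - 1, by omega⟩
        have a2 := el_succ w ⟨n, by omega⟩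
        simp only at a2
        rw [a2]
        simp [eneg]
      have := gap_of_good hα hβ hx _ _ hne _ _ v1 v2 (by omega) (by omega)
      rw [lab_neg] at this
      omega
    · unfold thr
      split_ifs with h
      · have := Pof_last hq x w hw (by omega); omega
      · omega

end BCproof

namespace BCproof

def asc {n : ℕ} (w : W n) (j : ℕ) : ℕ :=
  ∑ i ∈ Finset.range j, if lab (el w i) < lab (el w (i + 1)) then 1 else 0

lemma asc_le {n : ℕ} (w : W n) (j : ℕ) : asc w j ≤ j := by
  unfold asc
  refine (Finset.sum_le_card_nsmul _ _ 1 ?_).trans (by simp)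
  intro i _
  split_ifs <;> simp

lemma asc_thr {n : ℕ} (w : W n) (α β : ℤ) (j : ℕ) :
    α + (β - α) * (asc w (j + 1) : ℤ) = (β - α) * (asc w j : ℤ) +
      thr α β (lab (el w j)) (lab (el w (j + 1))) := by
  rw [asc, Finset.sum_range_succ, ← asc]
  unfold thr
  split_ifs <;> push_cast <;> ring

def PF {n m : ℕ} (α β : ℤ) (w : W n) (f : Fin n ↪o Fin (m + n)) : ℕ → ℤ
  | 0 => 0
  | j + 1 => if h : j < n then (f ⟨j, h⟩ : ℕ) - j + α * (j + 1) + (β - α) * (asc w (j + 1) : ℤ)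
      else 0

lemma PF_succ {n m : ℕ} (α β : ℤ) (w : W n) (f : Fin n ↪o Fin (m + n)) (j : ℕ) (h : j < n) :
    PF α β w f (j + 1) = (f ⟨j, h⟩ : ℕ) - j + α * (j + 1) + (β - α) * (asc w (j + 1) : ℤ) := by
  simp [PF, h]

lemma cfg_PF {n m q : ℕ} (hn : 0 < n) {α β : ℤ} {w : W n}
    (hm : 2 * (m : ℤ) + 2 * (α * n) + 2 * ((β - α) * (asc w n : ℤ)) +
      thr α β (lab (el w n)) (- lab (el w n)) ≤ q)
    (f : Fin n ↪o Fin (m + n)) : Cfg q α β w (PF α β w f) := by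
  refine ⟨rfl, fun j hj => ?_, ?_⟩
  · rw [PF_succ _ _ _ _ j hj]
    have h1 := asc_thr w α β j
    rcases j with _ | j
    · simp only [PF]
      have : (asc w 0 : ℤ) = 0 := by simp [asc]
      rw [this] at h1
      push_cast
      simp only [zero_add] at *
      linarith [Int.natCast_nonneg (f ⟨0, hj⟩ : ℕ)]
    · rw [PF_succ _ _ _ _ j (by omega)]
      have h2 : f ⟨j, by omega⟩ < f ⟨j + 1, hj⟩ := f.strictMono (by simp)
      have h3 : ((f ⟨j, by omega⟩ : ℕ) : ℤ) + 1 ≤ (f ⟨j + 1, hj⟩ : ℕ) := by exact_mod_cast h2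
      push_cast
      linarith
  · obtain ⟨n, rfl⟩ : ∃ m, n = m + 1 := ⟨n - 1, by omega⟩
    rw [PF_succ _ _ _ _ n (by omega)]
    have := (f ⟨n, by omega⟩).2
    have h3 : ((f ⟨n, by omega⟩ : ℕ) : ℤ) ≤ m + n := by exact_mod_cast (by omega)
    push_cast at *
    linarith

lemma exists_PF {n m q : ℕ} (hn : 0 < n) {α β : ℤ} {w : W n}
    (hm : (q : ℤ) < 2 * (m : ℤ) + 2 + 2 * (α * n) + 2 * ((β - α) * (asc w n : ℤ)) +
      thr α β (lab (el w n)) (- lab (el w n)))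
    {P : ℕ → ℤ} (h : Cfg q α β w P) :
    ∃ f : Fin n ↪o Fin (m + n), ∀ j ≤ n, PF α β w f j = P j := by
  set g : ℕ → ℤ := fun j => P (j + 1) + j - α * (j + 1) - (β - α) * (asc w (j + 1) : ℤ) with hg
  have g0 : 0 ≤ g 0 := by
    have h1 := asc_thr w α β 0
    have : (asc w 0 : ℤ) = 0 := by simp [asc]
    rw [this] at h1
    have h2 := h.step 0 hn
    have h3 := h.zero
    simp only [hg]
    push_cast
    simp only [zero_add] at *
    linarith
  have gs : ∀ j, j + 1 < n → g j < g (j + 1) := by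
    intro j hj
    have h1 := asc_thr w α β (j + 1)
    have h2 := h.step (j + 1) hj
    simp only [hg]
    push_cast
    linarith
  have gm : ∀ i j, i < j → j < n → g i < g j := by
    intro i j hij
    induction j, hij using Nat.le_induction with
    | base => exact gs i
    | succ j hij ih => exact fun hj => (ih (by omega)).trans (gs j hj)
  have gl : g (n - 1) < m + n := by
    obtain ⟨n, rfl⟩ : ∃ m, n = m + 1 := ⟨n - 1, by omega⟩
    have := h.last
    simp only [hg, Nat.add_sub_cancel]
    push_cast at *
    linarith
  have gn : ∀ j, j < n → 0 ≤ g j := by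
    intro j hj
    rcases Nat.eq_zero_or_pos j with rfl | h0
    · exact g0
    · exact g0.trans (gm 0 j h0 hj).le
  have gu : ∀ j, j < n → g j < m + n := by
    intro j hj
    rcases (show j ≤ n - 1 by omega).eq_or_lt with rfl | h0
    · exact gl
    · exact (gm j (n - 1) h0 (by omega)).trans gl
  let f0 : Fin n → Fin (m + n) := fun j => ⟨(g j).toNat, by
    have := gn j j.2; have := gu j j.2; omega⟩
  have hf0 : StrictMono f0 := by
    intro i j hij
    have := gm i j hij j.2
    have := gn i i.2
    simp only [f0, Fin.lt_def]
    omega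
  refine ⟨OrderEmbedding.ofStrictMono f0 hf0, fun j hj => ?_⟩
  rcases j with _ | j
  · simp [PF, h.zero]
  · rw [PF_succ _ _ _ _ j hj]
    have : ((f0 ⟨j, hj⟩ : ℕ) : ℤ) = g j := by
      simp only [f0]; exact Int.toNat_of_nonneg (gn j hj)
    simp only [OrderEmbedding.coe_ofStrictMono, this]
    simp only [hg]
    ring

lemma card_emb (n m : ℕ) : Nat.card (Fin n ↪o Fin (m + n)) = (m + n).choose n := by
  rw [Nat.card_congr (Set.powersetCard.ofFinEmbEquiv (n := n) (I := Fin (m + n)))]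
  rw [Set.powersetCard.card]
  simp

lemma mkx_congr {n q : ℕ} (w : W n) {P P' : ℕ → ℤ} (h : ∀ j ≤ n, P j = P' j) :
    mkx q w P = mkx q w P' := by
  ext i
  have := (w.1.symm i).2
  simp only [mkx]
  rw [h _ (by omega)]

/-- The main counting formula. -/
theorem count {n q : ℕ} (hn : 0 < n) (hq : 0 < q) {α β : ℤ} (hab : α ≤ β)
    (hαβ : (1 ≤ α ∧ 1 ≤ β) ∨ (α = 0 ∧ β = 1)) (m : W n → ℕ)
    (hm1 : ∀ w, 2 * (m w : ℤ) + 2 * (α * n) + 2 * ((β - α) * (asc w n : ℤ)) +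
      thr α β (lab (el w n)) (- lab (el w n)) ≤ q)
    (hm2 : ∀ w, (q : ℤ) < 2 * (m w : ℤ) + 2 + 2 * (α * n) + 2 * ((β - α) * (asc w n : ℤ)) +
      thr α β (lab (el w n)) (- lab (el w n))) :
    N_BC n q (1 - α) (β - 1) = ∑ w : W n, (m w + n).choose n := by
  have h0 : 0 ≤ α := by omega
  have hβ : 1 ≤ β := by omega
  let g : (Σ w : W n, (Fin n ↪o Fin (m w + n))) → (Fin n → ZMod q) :=
    fun z => mkx q z.1 (PF α β z.1 z.2)
  have hc : ∀ z : (Σ w : W n, (Fin n ↪o Fin (m w + n))), Cfg q α β z.1 (PF α β z.1 z.2) :=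
    fun z => cfg_PF hn (hm1 z.1) z.2
  have hinj : Function.Injective g := by
    rintro ⟨w, f⟩ ⟨w', f'⟩ h
    have s1 := cfg_sorted h0 hab hβ hq (hc ⟨w, f⟩)
    have s2 := cfg_sorted h0 hab hβ hq (hc ⟨w', f'⟩)
    have e : mkx q w (PF α β w f) = mkx q w' (PF α β w' f') := h
    simp only at s1 s2
    rw [← e] at s2
    obtain rfl := sorted_unique s1.1 s2.1
    congr 1
    ext j
    have h1 := (s1.2 j).symm.trans (s2.2 j)
    rw [PF_succ _ _ _ _ j j.2, PF_succ _ _ _ _ j j.2] at h1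
    simp at h1
    exact_mod_cast h1
  have hr : Set.range g = Good n q (1 - α) (β - 1) := by
    ext x
    constructor
    · rintro ⟨z, rfl⟩
      exact cfg_good h0 hab (hc z) _ (mkx_val _ _ rfl)
    · intro hx
      obtain ⟨w, hw⟩ := sorted_exists x
      obtain ⟨f, hf⟩ := exists_PF hn (hm2 w) (sorted_cfg hn hαβ hq hx hw)
      refine ⟨⟨w, f⟩, ?_⟩
      simp only [g]
      rw [mkx_congr w hf, mkx_Pof x w hw]
  have : N_BC n q (1 - α) (β - 1) = Nat.card (Set.range g) := by
    rw [hr]; rfl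
  rw [this, Nat.card_range_of_injective hinj, Nat.card_sigma]
  simp only [card_emb]

end BCproof

namespace BCproof

noncomputable def LL {ι : Type*} [Fintype ι] (s κ : ι → ℚ) (c : ℚ) (f : ℚ[X]) : ℚ[X] :=
  ∑ w, C (s w) * f.comp (X - C (c * κ w))

lemma LL_eval {ι : Type*} [Fintype ι] (s κ : ι → ℚ) (c : ℚ) (f : ℚ[X]) (z : ℚ) :
    (LL s κ c f).eval z = ∑ w, s w * f.eval (z - c * κ w) := by
  simp [LL, eval_finsetSum]

lemma LL_der {ι : Type*} [Fintype ι] (s κ : ι → ℚ) (c : ℚ) (f : ℚ[X]) :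
    derivative (LL s κ c f) = LL s κ c (derivative f) := by
  simp [LL, derivative_comp]

lemma LL_sub {ι : Type*} [Fintype ι] (s κ : ι → ℚ) (c r : ℚ) (f g : ℚ[X]) :
    LL s κ c (f - C r * g) = LL s κ c f - C r * LL s κ c g := by
  simp only [LL, sub_comp, mul_comp, C_comp, Finset.mul_sum, ← Finset.sum_sub_distrib]
  exact Finset.sum_congr rfl fun _ _ => by ring

lemma LL_kill {ι : Type*} [Fintype ι] (s κ : ι → ℚ) (g : ℚ[X]) (hg : g ≠ 0)
    (h : LL s κ 1 g = 0) (d : ℕ) : d ≤ g.natDegree + 1 →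
    ∀ f : ℚ[X], f.degree < d → LL s κ 1 f = 0 := by
  induction d with
  | zero =>
    intro _ f hf
    have : f = 0 := by simpa using hf
    simp [this, LL]
  | succ d ih =>
    intro hd f hf
    set G := derivative^[g.natDegree - d] g with hG
    have hGd : G.natDegree = d := by
      have : ∀ k, (derivative^[k] g).natDegree = g.natDegree - k := by
        intro k
        induction k with
        | zero => simp
        | succ k ih => rw [Function.iterate_succ_apply', natDegree_derivative, ih]; omega
      rw [hG, this]; omega
    have hG0 : LL s κ 1 G = 0 := by
      rw [hG]
      generalize g.natDegree - d = k
      induction k with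
      | zero => simpa using h
      | succ k ih => rw [Function.iterate_succ_apply', ← LL_der, ih]; simp
    have hGc : G.coeff d ≠ 0 := by
      rcases Nat.eq_zero_or_pos d with h0 | h0
      · have : G ≠ 0 := by
          intro hz
          rw [hG] at hz
          have h1 := Polynomial.coeff_iterate_derivative (p := g) (k := g.natDegree - d) 0
          rw [hz, coeff_zero, h0] at h1
          simp [hg] at h1
        rw [← hGd]; simpa using this
      · rw [← hGd]
        have : G ≠ 0 := by
          intro hz; rw [hz] at hGd; simp at hGd; omega
        simpa using this
    have h1 := ih (by omega) (f - C (f.coeff d / G.coeff d) * G) (by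
      rw [degree_lt_iff_coeff_zero] at hf ⊢
      intro m hm
      rw [coeff_sub, coeff_C_mul]
      rcases hm.eq_or_lt with rfl | hm
      · field_simp; simp
      · rw [hf m hm, coeff_eq_zero_of_natDegree_lt (p := G) (n := m) (by omega)]; simp)
    rw [LL_sub, hG0] at h1
    simpa using h1

lemma const_of_periodic (M : ℚ[X]) (h : ∀ z : ℚ, M.eval z = M.eval (z - 1 / 2)) :
    derivative M = 0 := by
  have h1 : ∀ k : ℕ, M.eval ((k : ℚ) / 2) = M.eval 0 := by
    intro k
    induction k with
    | zero => simp
    | succ k ih => rw [h, ← ih]; congr 1; push_cast; ring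
  have : M = C (M.eval 0) := by
    apply eq_of_infinite_eval_eq
    refine Set.Infinite.mono (s := Set.range (fun k : ℕ => (k : ℚ) / 2)) ?_ ?_
    · rintro _ ⟨k, rfl⟩
      simp [h1]
    · apply Set.infinite_range_of_injective
      intro i j hij
      simpa using hij
  rw [this]; simp

lemma abstract_shift {ι : Type*} [Fintype ι] (s κ : ι → ℚ) (H : ℚ[X]) (hn : 0 < H.natDegree)
    (h : ∀ z : ℚ, ∑ w, s w * H.eval (z - κ w) = ∑ w, s w * H.eval (z - 1 / 2 - κ w))
    (c : ℚ) (hc : c ≠ 0) (z z' : ℚ) :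
    ∑ w, s w * H.eval (z - c * κ w) = ∑ w, s w * H.eval (z' - c * κ w) := by
  have h1 : LL s κ 1 (derivative H) = 0 := by
    rw [← LL_der]
    apply const_of_periodic
    intro z
    simpa [LL_eval] using h z
  have hd : derivative H ≠ 0 := by
    intro h
    have := derivative_eq_zero.1 h
    omega
  have h2 := LL_kill s κ (derivative H) hd h1 _ le_rfl
  have h3 : LL s κ c (derivative H) = 0 := by
    apply Polynomial.funext
    intro z
    have := h2 ((derivative H).comp (C c * X)) (by
      refine lt_of_le_of_lt degree_le_natDegree ?_
      have h5 : ((derivative H).comp (C c * X)).natDegree ≤ (derivative H).natDegree := by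
        refine natDegree_comp_le.trans ?_
        have h6 : (C c * X : ℚ[X]).natDegree ≤ 1 := by
          rw [natDegree_C_mul_X c hc]
        exact (Nat.mul_le_mul_left _ h6).trans (by simp)
      exact_mod_cast Nat.lt_succ_of_le h5)
    have := congrArg (eval (z / c)) this
    rw [LL_eval] at this ⊢
    simp only [eval_comp, eval_mul, eval_C, eval_X, eval_zero] at this ⊢
    rw [← this]
    refine Finset.sum_congr rfl fun w _ => ?_
    congr 2
    field_simp
  rw [← LL_der] at h3
  have h4 := eq_C_of_natDegree_eq_zero (derivative_eq_zero.1 h3)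
  rw [← LL_eval, ← LL_eval, h4]
  simp

end BCproof

namespace BCproof

def ng {n : ℕ} (w : W n) : Prop := lab (el w n) < 0

noncomputable instance {n : ℕ} (w : W n) : Decidable (ng w) := Classical.dec _

noncomputable def HH (n : ℕ) : ℚ[X] := preHilbertPoly ℚ n 0

lemma HH_eval (n m : ℕ) : (HH n).eval (m : ℚ) = ((m + n).choose n : ℕ) := by
  rw [HH, preHilbertPoly_eq_choose_sub_add ℚ n (Nat.zero_le m)]; simp

lemma thr_ng {n : ℕ} (w : W n) (α β : ℤ) :
    thr α β (lab (el w n)) (- lab (el w n)) = if ng w then β else α := by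
  unfold thr ng
  split_ifs <;> first | rfl | omega

lemma count_poly {n : ℕ} (hn : 0 < n) {α β : ℤ} (hab : α ≤ β)
    (hαβ : (1 ≤ α ∧ 1 ≤ β) ∨ (α = 0 ∧ β = 1)) (τα τβ ρ : ℤ) (hρ : 0 ≤ ρ)
    (h1 : α ≤ 2 * τα + ρ) (h2 : 2 * τα + ρ < α + 2)
    (h3 : β ≤ 2 * τβ + ρ) (h4 : 2 * τβ + ρ < β + 2) (R : ℚ[X])
    (hR : ∃ M : ℕ, ∀ q h : ℕ, M < q → (q : ℤ) = 2 * h + ρ →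
      R.eval (q : ℚ) = (N_BC n q (1 - α) (β - 1) : ℚ)) (t : ℚ) :
    R.eval t = ∑ w : W n, (HH n).eval ((t - ρ) / 2 - α * n - (β - α) * (asc w n : ℚ) -
      (if ng w then (τβ : ℚ) else (τα : ℚ))) := by
  obtain ⟨M, hM⟩ := hR
  let S : ℚ[X] := ∑ w : W n, (HH n).comp (C (1 / 2) * (X - C (ρ : ℚ)) -
    C (α * n + (β - α) * (asc w n : ℚ) + (if ng w then (τβ : ℚ) else (τα : ℚ))))
  have hS : ∀ t, S.eval t = ∑ w : W n, (HH n).eval ((t - ρ) / 2 - α * n -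
      (β - α) * (asc w n : ℚ) - (if ng w then (τβ : ℚ) else (τα : ℚ))) := by
    intro t
    simp only [S, eval_finsetSum, eval_comp, eval_sub, eval_mul, eval_C, eval_X]
    refine Finset.sum_congr rfl fun w _ => ?_
    congr 1
    ring
  rw [← hS]
  congr 1
  apply eq_of_infinite_eval_eq
  let B : ℕ := M + 1 + (β * n + |τα| + |τβ|).toNat
  let φ : ℕ → ℚ := fun k => ((2 * (k + B) + ρ.toNat : ℕ) : ℚ)
  refine Set.Infinite.mono (s := Set.range φ) ?_ ?_
  · rintro _ ⟨k, rfl⟩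
    have h0 : 0 ≤ α := by omega
    have hbn : 0 ≤ β * n := mul_nonneg (by omega) (by omega)
    have hτα := abs_nonneg τα
    have hτβ := abs_nonneg τβ
    have hqq : ((2 * (k + B) + ρ.toNat : ℕ) : ℤ) = 2 * (k + B : ℕ) + ρ := by
      push_cast; rw [Int.toNat_of_nonneg hρ]
    have hq0 : M < 2 * (k + B) + ρ.toNat := by omega
    show R.eval (φ k) = S.eval (φ k)
    simp only [φ]
    rw [hM _ (k + B) hq0 hqq, hS]
    set q := 2 * (k + B) + ρ.toNat with hq
    let e : W n → ℤ := fun w => (k + B : ℕ) - α * n - (β - α) * (asc w n : ℤ) -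
      (if ng w then τβ else τα)
    have he : ∀ w, 0 ≤ e w := by
      intro w
      have a1 : (β - α) * (asc w n : ℤ) ≤ (β - α) * n :=
        mul_le_mul_of_nonneg_left (by exact_mod_cast asc_le w n) (by omega)
      have a2 : (if ng w then τβ else τα) ≤ |τα| + |τβ| := by
        have := le_abs_self τα
        have := le_abs_self τβ
        split_ifs <;> omega
      have a3 : β * n + |τα| + |τβ| ≤ ((k + B : ℕ) : ℤ) := by
        simp only [B]; omega
      simp only [e]
      have : (β - α) * (n : ℤ) = β * n - α * n := by ring
      linarith
    have hm : ∀ w, (((e w).toNat : ℕ) : ℤ) = e w := fun w => Int.toNat_of_nonneg (he w)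
    rw [count hn (q := q) (by omega) hab hαβ (fun w => (e w).toNat)]
    · push_cast
      refine Finset.sum_congr rfl fun w _ => ?_
      rw [← HH_eval]
      congr 1
      have b1 : (((e w).toNat : ℕ) : ℚ) = ((e w : ℤ) : ℚ) := by
        exact_mod_cast congrArg (Int.cast : ℤ → ℚ) (hm w)
      have b2 : (q : ℚ) = 2 * ((k + B : ℕ) : ℚ) + ρ := by exact_mod_cast hqq
      rw [b1, b2]
      simp only [e]
      push_cast
      split_ifs <;> ring
    · intro w
      rw [hm, thr_ng, hqq]
      simp only [e]
      split_ifs <;> linarith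
    · intro w
      rw [hm, thr_ng, hqq]
      simp only [e]
      split_ifs <;> linarith
  · apply Set.infinite_range_of_injective
    intro i j hij
    have : 2 * (i + B) + ρ.toNat = 2 * (j + B) + ρ.toNat := Nat.cast_injective (R := ℚ) hij
    omega

lemma N_empty (n q : ℕ) (hq : 0 < q) : N_BC n q (1 - 0) (1 - 1) = q ^ n := by
  have : NeZero q := ⟨hq.ne'⟩
  have h : ∀ x : ZMod q, Avoids x (1 - 0) (1 - 1) := by
    intro x k h1 h2
    omega
  simp only [N_BC, h, and_self, implies_true, Set.ofPred_true, Set.ncard_univ]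
  simp

noncomputable def ss {n : ℕ} (w : W n) : ℚ := if ng w then -1 else 1

noncomputable def κκ {n : ℕ} (w : W n) : ℚ := (asc w n : ℚ) + if ng w then 1 / 2 else 0

lemma base_shift {n : ℕ} (hn : 0 < n) (z : ℚ) :
    ∑ w : W n, ss w * (HH n).eval (z - κκ w) =
      ∑ w : W n, ss w * (HH n).eval (z - 1 / 2 - κκ w) := by
  have e1 := count_poly (n := n) hn (α := 0) (β := 1) (by norm_num) (Or.inr ⟨rfl, rfl⟩) 0 0 1
    (by norm_num) (by norm_num) (by norm_num) (by norm_num) (by norm_num) (X ^ n)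
    ⟨0, fun q h hq _ => by rw [N_empty n q hq]; simp⟩ (2 * z)
  have e2 := count_poly (n := n) hn (α := 0) (β := 1) (by norm_num) (Or.inr ⟨rfl, rfl⟩) 0 1 0
    (by norm_num) (by norm_num) (by norm_num) (by norm_num) (by norm_num) (X ^ n)
    ⟨0, fun q h hq _ => by rw [N_empty n q hq]; simp⟩ (2 * z)
  rw [e1] at e2
  rw [← sub_eq_zero] at e2 ⊢
  rw [← Finset.sum_sub_distrib] at e2 ⊢
  rw [← neg_eq_zero, ← Finset.sum_neg_distrib] at e2
  rw [← e2]
  refine Finset.sum_congr rfl fun w _ => ?_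
  unfold ss κκ
  split_ifs
  · rw [show (2 * z - ((1 : ℤ) : ℚ)) / 2 - ((0 : ℤ) : ℚ) * n - (((1 : ℤ) : ℚ) - ((0 : ℤ) : ℚ)) *
      (asc w n : ℚ) - ((0 : ℤ) : ℚ) = z - ((asc w n : ℚ) + 1 / 2) by push_cast; ring,
      show (2 * z - ((0 : ℤ) : ℚ)) / 2 - ((0 : ℤ) : ℚ) * n - (((1 : ℤ) : ℚ) - ((0 : ℤ) : ℚ)) *
      (asc w n : ℚ) - ((1 : ℤ) : ℚ) = z - 1 / 2 - ((asc w n : ℚ) + 1 / 2) by push_cast; ring]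
    ring
  · rw [show (2 * z - ((1 : ℤ) : ℚ)) / 2 - ((0 : ℤ) : ℚ) * n - (((1 : ℤ) : ℚ) - ((0 : ℤ) : ℚ)) *
      (asc w n : ℚ) - ((0 : ℤ) : ℚ) = z - 1 / 2 - ((asc w n : ℚ) + 0) by push_cast; ring,
      show (2 * z - ((0 : ℤ) : ℚ)) / 2 - ((0 : ℤ) : ℚ) * n - (((1 : ℤ) : ℚ) - ((0 : ℤ) : ℚ)) *
      (asc w n : ℚ) - ((0 : ℤ) : ℚ) = z - ((asc w n : ℚ) + 0) by push_cast; ring]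
    ring

lemma gen_shift {n : ℕ} (hn : 0 < n) (c : ℚ) (hc : c ≠ 0) (z : ℚ) :
    ∑ w : W n, ss w * (HH n).eval (z - c * κκ w) =
      ∑ w : W n, ss w * (HH n).eval (z - 1 / 2 - c * κκ w) :=
  abstract_shift ss κκ (HH n) (by rw [HH, natDegree_preHilbertPoly]; exact hn) (base_shift hn) c hc
    _ _

theorem main (n : ℕ) (hn : 2 ≤ n) (a b : ℕ) (hab : a ≤ b)
    (s : ℕ) (hs : s = if Odd a ∧ Odd b then (2 * n + 1) * a + 1 else (2 * n + 1) * a)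
    (P Q : ℚ[X])
    (hP : ∃ M : ℕ, ∀ q : ℕ, Odd q → M < q → P.eval (q : ℚ) = (N_BC n q (-(a : ℤ)) (b : ℤ) : ℚ))
    (hQ : ∃ M : ℕ, ∀ q : ℕ, Odd q → M < q →
      Q.eval (q : ℚ) = (N_BC n q 0 ((b : ℤ) - (a : ℤ)) : ℚ)) :
    P = Q.comp (X - C (s : ℚ)) := by
  have hn0 : 0 < n := by omega
  have eP := count_poly (n := n) hn0 (α := a + 1) (β := b + 1) (by omega) (Or.inl (by omega))
    ((a + 1) / 2) ((b + 1) / 2) 1 (by norm_num) (by omega) (by omega) (by omega) (by omega) P (by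
      obtain ⟨M, hM⟩ := hP
      refine ⟨M, fun q h hq hh => ?_⟩
      rw [hM q ⟨h, by omega⟩ hq]
      congr 3 <;> ring)
  have eQ := count_poly (n := n) hn0 (α := 1) (β := b - a + 1) (by omega) (Or.inl (by omega))
    0 ((b - a + 1) / 2) 1 (by norm_num) (by omega) (by omega) (by omega) (by omega) Q (by
      obtain ⟨M, hM⟩ := hQ
      refine ⟨M, fun q h hq hh => ?_⟩
      rw [hM q ⟨h, by omega⟩ hq]
      rw [show (1 : ℤ) - 1 = 0 by norm_num, show (b : ℤ) - a + 1 - 1 = b - a by ring])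
  apply Polynomial.funext
  intro t
  rw [eval_comp, eval_sub, eval_X, eval_C, eP, eQ]
  rcases Nat.even_or_odd' a with ⟨a', rfl | rfl⟩
  · have hs' : s = (2 * n + 1) * (2 * a') := by
      rw [hs, if_neg]; rintro ⟨⟨k, h⟩, -⟩; omega
    refine Finset.sum_congr rfl fun w _ => ?_
    congr 1
    have d1 : (((2 * a' : ℕ) : ℤ) + 1) / 2 = a' := by omega
    have d2 : ((b : ℤ) + 1) / 2 = a' + ((b : ℤ) - (2 * a' : ℕ) + 1) / 2 := by omega
    rw [d1, d2, hs']
    push_cast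
    split_ifs <;> ring
  · rcases Nat.even_or_odd' b with ⟨b', rfl | rfl⟩
    · have hs' : s = (2 * n + 1) * (2 * a' + 1) := by
        rw [hs, if_neg]; rintro ⟨-, ⟨k, h⟩⟩; omega
      have g := gen_shift hn0 ((2 * b' : ℕ) - (2 * a' + 1 : ℕ) : ℚ)
        (by intro h; rw [sub_eq_zero] at h; have : 2 * b' = 2 * a' + 1 := by exact_mod_cast h
            omega)
        ((t - 1) / 2 - (2 * a' + 2) * n - (2 * a' + 1) / 2)
      have d1 : (((2 * a' + 1 : ℕ) : ℤ) + 1) / 2 = a' + 1 := by omega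
      have d2 : (((2 * b' : ℕ) : ℤ) + 1) / 2 = b' := by omega
      have d3 : (((2 * b' : ℕ) : ℤ) - (2 * a' + 1 : ℕ) + 1) / 2 = b' - a' := by omega
      rw [d1, d2, d3, hs']
      rw [← sub_eq_zero] at g ⊢
      rw [← Finset.sum_sub_distrib] at g ⊢
      rw [← neg_eq_zero, ← Finset.sum_neg_distrib, ← g]
      refine Finset.sum_congr rfl fun w _ => ?_
      unfold ss κκ
      push_cast
      have key : ∀ A B A' B' : ℚ, A = A' → B = B' →
          -((HH n).eval A - (HH n).eval B) = (HH n).eval B' - (HH n).eval A' := by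
        rintro A B _ _ rfl rfl; ring
      split_ifs
      · rw [show ∀ u v : ℚ, -1 * u - -1 * v = v - u by intros; ring]
        apply key <;> ring
      · rw [show ∀ u v : ℚ, 1 * u - 1 * v = u - v by intros; ring]
        apply key <;> ring
    · have hs' : s = (2 * n + 1) * (2 * a' + 1) + 1 := by
        rw [hs, if_pos]; exact ⟨⟨a', rfl⟩, ⟨b', rfl⟩⟩
      refine Finset.sum_congr rfl fun w _ => ?_
      congr 1
      have d1 : (((2 * a' + 1 : ℕ) : ℤ) + 1) / 2 = a' + 1 := by omega
      have d2 : (((2 * b' + 1 : ℕ) : ℤ) + 1) / 2 = b' + 1 := by omega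
      have d3 : (((2 * b' + 1 : ℕ) : ℤ) - (2 * a' + 1 : ℕ) + 1) / 2 = b' - a' := by omega
      rw [d1, d2, d3, hs']
      push_cast
      split_ifs <;> ring

end BCproof

/-- Proposition 5.3 for type `BC`. With `s = (2n+1)a + 1` if `a` and
`b` are both odd and `s = (2n+1)a` otherwise: if `P` interpolates `N_BC(n,·,-a,b)`
and `Q` interpolates `N_BC(n,·,0,b-a)` on large odd integers, then `P(X) = Q(X-s)`. -/
theorem statement16 (n : ℕ) (hn : 2 ≤ n) (a b : ℕ) (hab : a ≤ b)
    (s : ℕ) (hs : s = if Odd a ∧ Odd b then (2 * n + 1) * a + 1 else (2 * n + 1) * a)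
    (P Q : ℚ[X])
    (hP : ∃ M : ℕ, ∀ q : ℕ, Odd q → M < q → P.eval (q : ℚ) = (N_BC n q (-(a : ℤ)) (b : ℤ) : ℚ))
    (hQ : ∃ M : ℕ, ∀ q : ℕ, Odd q → M < q → Q.eval (q : ℚ) = (N_BC n q 0 ((b : ℤ) - (a : ℤ)) : ℚ)) :
    P = Q.comp (X - C (s : ℚ)) := by
  exact BCproof.main n hn a b hab s hs P Q hP hQ
end

section
/- Let n \ge 1 and a \ge 1 be integers, and write g(y) := y^{2n+1} \cdot (1 + y^2 + y^4 + ... + y^{2a-2})^{n+1} = \sum_k g_k y^k. There exists an integer N (depending on n and a) such that for every odd integer q > N, the number of tuples x \in (ZMod q)^n satisfying: x_i \ne (k : ZMod q) for all integers 0 \le k \le a and all i; 2x_i \ne (k : ZMod q) for all odd integers k with 1 \le k \le 2a-1 and all i; and x_i - x_j \ne (k : ZMod q) and x_i + x_j \ne (k : ZMod q) for all integers 0 \le k \le a and all 1 \le i < j \le n, equals (1/a^{n+1}) \sum_k g_k (q-k)^n. -/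
open Polynomial

/-- The number of `n`-tuples over `ZMod q` with `x_i ≠ 0, 1, ..., a`;
`2x_i ≠ 1, 3, ..., 2a-1`; and `x_i ± x_j ≠ 0, 1, ..., a` for `i < j`. -/
noncomputable def W (n q a : ℕ) : ℕ :=
  Set.ncard {x : Fin n → ZMod q |
    (∀ i, ∀ k : ℤ, 0 ≤ k → k ≤ (a : ℤ) → x i ≠ (k : ZMod q)) ∧
    (∀ i, ∀ k : ℤ, Odd k → 1 ≤ k → k ≤ 2 * (a : ℤ) - 1 → 2 * x i ≠ (k : ZMod q)) ∧
    (∀ i j : Fin n, i < j → ∀ k : ℤ, 0 ≤ k → k ≤ (a : ℤ) →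
      x i - x j ≠ (k : ZMod q) ∧ x i + x j ≠ (k : ZMod q))}


def RR (c1 c2 : ℕ) (x y : ℕ × ℤ) : Prop :=
  x.1 + c1 + c2 ≤ y.1 ∨ (x.1 + c1 ≤ y.1 ∧ x.2 < y.2)

theorem RR_trans (c1 c2 : ℕ) : IsTrans (ℕ × ℤ) (RR c1 c2) := by
  constructor
  rintro ⟨a, a'⟩ ⟨b, b'⟩ ⟨c, c'⟩ h1 h2
  simp only [RR] at *
  omega

def lab {n : ℕ} (i : Fin n) (b : Bool) : ℤ := if b then (i : ℤ) - n else n - i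

theorem lab_true {n : ℕ} (i : Fin n) : lab i true = (i : ℤ) - n := rfl
theorem lab_false {n : ℕ} (i : Fin n) : lab i false = (n : ℤ) - i := rfl

theorem lab_inj {n : ℕ} {i j : Fin n} {b c : Bool} (h : lab i b = lab j c) : i = j := by
  have := i.2
  have := j.2
  cases b <;> cases c <;> simp only [lab_true, lab_false] at h <;> ext <;> omega

def pt {n : ℕ} (x : Fin n → ℕ × Bool) (i : Fin n) : ℕ × ℤ := ((x i).1, lab i (x i).2)

def XX (n c1 c2 L : ℕ) : Set (Fin n → ℕ × Bool) :=
  {x | (∀ i, RR c1 c2 (0, 0) (pt x i)) ∧ (∀ i, RR c1 c2 (pt x i) (L, 0)) ∧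
    ∀ i j, i ≠ j → RR c1 c2 (pt x i) (pt x j) ∨ RR c1 c2 (pt x j) (pt x i)}

def ext2 {n : ℕ} {α : Type} (l r : α) (s : Fin n → α) : Fin (n + 2) → α :=
  Fin.cons (α := fun _ => α) l (Fin.snoc (α := fun _ => α) s r)

theorem ext2_zero {n : ℕ} {α : Type} (l r : α) (s : Fin n → α) : ext2 l r s 0 = l := rfl
theorem ext2_last {n : ℕ} {α : Type} (l r : α) (s : Fin n → α) :
    ext2 l r s (Fin.last _) = r := by
  rw [ext2, ← Fin.succ_last, Fin.cons_succ, Fin.snoc_last]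
theorem ext2_mid {n : ℕ} {α : Type} (l r : α) (s : Fin n → α) (j : Fin n) :
    ext2 l r s j.castSucc.succ = s j := by
  rw [ext2, Fin.cons_succ, Fin.snoc_castSucc]

theorem forall_ext {n : ℕ} {P : Fin (n + 2) → Prop} :
    (∀ i, P i) ↔ P 0 ∧ (∀ j : Fin n, P j.castSucc.succ) ∧ P (Fin.last _) := by
  rw [Fin.forall_fin_succ, Fin.forall_fin_succ']
  rfl

/-- the sorted sequences -/
def ZZ (n c1 c2 L : ℕ) : Set (Equiv.Perm (Fin n) × (Fin n → Bool) × (Fin n → ℕ)) :=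
  {z | ∀ i : Fin (n + 1),
    RR c1 c2 (ext2 (0, 0) (L, 0) (fun j => (z.2.2 j, lab (z.1 j) (z.2.1 j))) i.castSucc)
      (ext2 (0, 0) (L, 0) (fun j => (z.2.2 j, lab (z.1 j) (z.2.1 j))) i.succ)}

theorem ext_pair {n : ℕ} (hn : 1 ≤ n) (c1 c2 : ℕ) (l r : ℕ × ℤ) (s : Fin n → ℕ × ℤ) :
    (∀ i : Fin (n + 1), RR c1 c2 (ext2 l r s i.castSucc) (ext2 l r s i.succ)) ↔
    (∀ i, RR c1 c2 l (s i)) ∧ (∀ i, RR c1 c2 (s i) r) ∧ ∀ i j, i < j → RR c1 c2 (s i) (s j) := by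
  have := RR_trans c1 c2
  rw [← Fin.liftFun_iff_succ (RR c1 c2) (f := ext2 l r s)]
  constructor
  · intro h
    refine ⟨fun i => ?_, fun i => ?_, fun i j hij => ?_⟩
    · have := @h 0 i.castSucc.succ (Fin.succ_pos _)
      rwa [ext2_mid, ext2_zero] at this
    · have := @h i.castSucc.succ (Fin.last _) (by
        show i.castSucc.succ < Fin.last _
        rw [← Fin.succ_last, Fin.succ_lt_succ_iff]; exact Fin.castSucc_lt_last i)
      rwa [ext2_mid, ext2_last] at this
    · have := @h i.castSucc.succ j.castSucc.succ (by simpa using hij)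
      rwa [ext2_mid, ext2_mid] at this
  · rintro ⟨h1, h2, h3⟩
    have key : ∀ i j : Fin (n + 2), i < j → RR c1 c2 (ext2 l r s i) (ext2 l r s j) := by
      rw [forall_ext]
      simp only [forall_ext (n := n), ext2_mid, ext2_last, ext2_zero]
      refine ⟨⟨fun h => absurd h (lt_irrefl _), fun j _ => h1 j, fun _ => ?_⟩, ?_, ?_⟩
      · exact _root_.trans (h1 ⟨0, hn⟩) (h2 ⟨0, hn⟩)
      · intro i
        refine ⟨fun h => absurd h (by simp), fun j hij => h3 i j (by simpa using hij), fun _ => h2 i⟩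
      · refine ⟨fun h => absurd h (by simp), fun j hij => absurd hij (by simp [Fin.le_last]), 
          fun h => absurd h (lt_irrefl _)⟩
    intro i j hij
    exact key i j hij

theorem RR_lex {c1 c2 : ℕ} (h2 : 1 ≤ c2) {x y : ℕ × ℤ} (h : RR c1 c2 x y) : toLex x < toLex y := by
  rw [Prod.Lex.toLex_lt_toLex]
  simp only [RR] at h
  omega

theorem card_ZZ_XX {n : ℕ} (hn : 1 ≤ n) (c1 c2 L : ℕ) (h2 : 1 ≤ c2) :
    (ZZ n c1 c2 L).ncard = (XX n c1 c2 L).ncard := by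
  refine Set.ncard_congr (fun z _ => fun i => (z.2.2 (z.1.symm i), z.2.1 (z.1.symm i))) ?_ ?_ ?_
  · rintro ⟨σ, e, s⟩ hz
    simp only [ZZ, Set.mem_ofPred_eq, ext_pair hn] at hz
    obtain ⟨h1, h2, h3⟩ := hz
    refine ⟨fun i => ?_, fun i => ?_, fun i j hij => ?_⟩
    · simpa [pt] using h1 (σ.symm i)
    · simpa [pt] using h2 (σ.symm i)
    · rcases lt_or_gt_of_ne (fun h => hij (σ.symm.injective h)) with h | h
      · left; simpa [pt] using h3 _ _ h
      · right; simpa [pt] using h3 _ _ h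
  · rintro ⟨σ, e, s⟩ ⟨τ, f, t⟩ hz hw heq
    simp only [ZZ, Set.mem_ofPred_eq, ext_pair hn] at hz hw
    have e1 : ∀ i, s (σ.symm i) = t (τ.symm i) := fun i => congrArg Prod.fst (congrFun heq i)
    have e2 : ∀ i, e (σ.symm i) = f (τ.symm i) := fun i => congrArg Prod.snd (congrFun heq i)
    have m1 : StrictMono ((fun i => toLex (s (σ.symm i), lab i (e (σ.symm i)))) ∘ σ) := by
      intro i j hij
      simpa using RR_lex h2 (hz.2.2 i j hij)
    have m2 : StrictMono ((fun i => toLex (s (σ.symm i), lab i (e (σ.symm i)))) ∘ τ) := by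
      intro i j hij
      simpa [e1, e2] using RR_lex h2 (hw.2.2 i j hij)
    have hst := Tuple.unique_monotone m1.monotone m2.monotone
    have : σ = τ := by
      ext1 i
      have := congrFun hst i
      simp only [Function.comp, toLex_inj, Prod.mk.injEq] at this
      exact lab_inj this.2
    subst this
    have : e = f := by ext1 i; simpa using e2 (σ i)
    have : s = t := by ext1 i; simpa using e1 (σ i)
    simp [*]
  · rintro x ⟨h1, h2', h3⟩
    let key : Fin n → Lex (ℕ × ℤ) := fun i => toLex (pt x i)
    have kinj : Function.Injective key := by
      intro i j hij
      simp only [key, toLex_inj, pt, Prod.mk.injEq] at hij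
      exact lab_inj hij.2
    refine ⟨⟨Tuple.sort key, fun j => (x (Tuple.sort key j)).2, fun j => (x (Tuple.sort key j)).1⟩,
      ?_, by simp⟩
    have hm : StrictMono (key ∘ Tuple.sort key) :=
      (Tuple.monotone_sort key).strictMono_of_injective (kinj.comp (Equiv.injective _))
    simp only [ZZ, Set.mem_ofPred_eq, ext_pair hn]
    refine ⟨fun i => h1 _, fun i => h2' _, fun i j hij => ?_⟩
    rcases h3 (Tuple.sort key i) (Tuple.sort key j) (by simpa using hij.ne) with h | h
    · exact h
    · exact absurd (hm hij) (not_lt_of_gt (RR_lex h2 h))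

def UU {n : ℕ} (σ : Equiv.Perm (Fin n)) (e : Fin n → Bool) : Fin (n + 2) → ℤ :=
  ext2 0 0 (fun j => lab (σ j) (e j))

/-- gap vectors -/
def YY (n c1 c2 L : ℕ) : Set (Equiv.Perm (Fin n) × (Fin n → Bool) × (Fin (n + 1) → ℕ)) :=
  {y | ∑ i, y.2.2 i = L ∧ ∀ i : Fin (n + 1),
    c1 + (if UU y.1 y.2.1 i.castSucc < UU y.1 y.2.1 i.succ then 0 else c2) ≤ y.2.2 i}

theorem partialSum_last' {n : ℕ} (d : Fin n → ℕ) : Fin.partialSum d (Fin.last _) = ∑ i, d i := by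
  rw [← List.sum_ofFn, Fin.partialSum, List.take_of_length_le (by simp)]

theorem ext2_prod {n : ℕ} (L : ℕ) (s : Fin n → ℕ) (u : Fin n → ℤ) (i) :
    ext2 (0, 0) (L, 0) (fun j => (s j, u j)) i = (ext2 0 L s i, ext2 0 0 u i) := by
  revert i
  rw [forall_ext]
  simp [ext2_zero, ext2_last, ext2_mid]

theorem RR_iff (c1 c2 s t : ℕ) (u v : ℤ) : RR c1 c2 (s, u) (t, v) ↔
    s + (c1 + (if u < v then 0 else c2)) ≤ t := by
  simp only [RR]
  split_ifs <;> omega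

theorem ext2_partialSum {n : ℕ} (d : Fin (n + 1) → ℕ) :
    ext2 0 (∑ i, d i) (fun j : Fin n => Fin.partialSum d j.castSucc.succ) = Fin.partialSum d := by
  funext i
  revert i
  rw [forall_ext]
  simp only [ext2_zero, ext2_last, ext2_mid, partialSum_last', Fin.partialSum_zero]
  simp

theorem card_YY_ZZ (n c1 c2 L : ℕ) :
    (YY n c1 c2 L).ncard = (ZZ n c1 c2 L).ncard := by
  refine Set.ncard_congr (fun y _ => (y.1, y.2.1, fun j => Fin.partialSum y.2.2 j.castSucc.succ))
    ?_ ?_ ?_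
  · rintro ⟨σ, e, d⟩ ⟨rfl, hd⟩
    simp only [ZZ, Set.mem_ofPred_eq, ext2_prod, RR_iff, ext2_partialSum] at *
    intro i
    rw [Fin.partialSum_succ]
    have := hd i
    change _ + (c1 + (if UU σ e i.castSucc < UU σ e i.succ then 0 else c2)) ≤ _
    omega
  · rintro ⟨σ, e, d⟩ ⟨τ, f, t⟩ ⟨h1, hz⟩ ⟨h2, hw⟩ heq
    simp only [Prod.mk.injEq] at heq h1 h2
    obtain ⟨rfl, rfl, h3⟩ := heq
    have a1 := ext2_partialSum d
    have a2 := ext2_partialSum t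
    rw [h1, h3] at a1
    rw [h2, a1] at a2
    have : d = t := by
      funext i
      have b1 := Fin.partialSum_succ d i
      have b2 := Fin.partialSum_succ t i
      rw [a2] at b1
      omega
    simp [this]
  · rintro ⟨σ, e, s⟩ hz
    simp only [ZZ, Set.mem_ofPred_eq, ext2_prod, RR_iff] at hz
    let d : Fin (n + 1) → ℕ := fun i => ext2 0 L s i.succ - ext2 0 L s i.castSucc
    have hp : ∀ i, Fin.partialSum d i = ext2 0 L s i := by
      intro i
      induction i using Fin.induction with
      | zero => simp [ext2_zero]
      | succ i ih =>
        rw [Fin.partialSum_succ, ih]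
        have := hz i
        simp only [d]
        omega
    refine ⟨⟨σ, e, d⟩, ⟨?_, ?_⟩, ?_⟩
    · show ∑ i, d i = L
      rw [← partialSum_last', hp, ext2_last]
    · intro i
      have := hz i
      change _ + (c1 + (if UU σ e i.castSucc < UU σ e i.succ then 0 else c2)) ≤ _ at this
      simp only [d]
      omega
    · simp only [Prod.mk.injEq, true_and]
      funext j
      rw [hp, ext2_mid]

theorem card_XX_box (n k : ℕ) : (XX n 0 1 k).ncard = (2 * k) ^ n := by
  let B : Finset (ℕ × Bool) := (Finset.Icc 1 k ×ˢ {true}) ∪ (Finset.range k ×ˢ {false})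
  have hB : B.card = 2 * k := by
    rw [Finset.card_union_of_disjoint]
    · simp; ring
    · rw [Finset.disjoint_left]
      rintro ⟨p, b⟩ h1 h2
      simp at h1 h2
      simp_all
  have : XX n 0 1 k = ↑(Fintype.piFinset fun _ : Fin n => B) := by
    ext x
    simp only [XX, Set.mem_ofPred_eq, Fintype.coe_piFinset, Set.mem_pi, Set.mem_univ, true_imp_iff]
    constructor
    · rintro ⟨h1, h2, -⟩ i
      have := h1 i
      have := h2 i
      have hi := i.2
      clear h1 h2
      simp only [pt] at *
      generalize x i = t at *
      obtain ⟨p, b⟩ := t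
      cases b <;> simp only [B, RR, lab_true, lab_false, Finset.mem_coe,
        Finset.mem_union, Finset.mem_product, Finset.mem_Icc, Finset.mem_range,
        Finset.mem_singleton] at * <;> simp at * <;> omega
    · intro h
      refine ⟨fun i => ?_, fun i => ?_, fun i j hij => ?_⟩
      · have := h i
        have hi := i.2
        clear h
        simp only [pt] at *
        generalize x i = t at *
        obtain ⟨p, b⟩ := t
        cases b <;> simp only [B, RR, lab_true, lab_false, Finset.mem_coe,
        Finset.mem_union, Finset.mem_product, Finset.mem_Icc, Finset.mem_range,
        Finset.mem_singleton] at * <;> simp at * <;> omega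
      · have := h i
        have hi := i.2
        clear h
        simp only [pt] at *
        generalize x i = t at *
        obtain ⟨p, b⟩ := t
        cases b <;> simp only [B, RR, lab_true, lab_false, Finset.mem_coe,
        Finset.mem_union, Finset.mem_product, Finset.mem_Icc, Finset.mem_range,
        Finset.mem_singleton] at * <;> simp at * <;> omega
      · have : (pt x i).2 ≠ (pt x j).2 := fun h => hij (lab_inj h)
        simp only [RR]
        omega
  rw [this, Set.ncard_coe_finset, Fintype.card_piFinset_const, hB]

theorem card_YY_box {n : ℕ} (hn : 1 ≤ n) (k : ℕ) : (YY n 0 1 k).ncard = (2 * k) ^ n := by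
  rw [card_YY_ZZ, card_ZZ_XX hn _ _ _ le_rfl, card_XX_box]

theorem YY_finite (n c1 c2 L : ℕ) : (YY n c1 c2 L).Finite := by
  refine Set.Finite.subset (Set.finite_univ.prod (Set.finite_univ.prod
    (Set.finite_Iic (fun _ : Fin (n + 1) => L)))) ?_
  rintro ⟨σ, e, d⟩ ⟨h, -⟩
  simp only [Set.mem_prod, Set.mem_univ, true_and, Set.mem_Iic]
  intro i
  rw [← h]
  exact Finset.single_le_sum (f := d) (fun _ _ => Nat.zero_le _) (Finset.mem_univ i)

theorem card_YY_mod {n a M : ℕ} (hn : 1 ≤ n) (ha : 1 ≤ a) (hM : (n + 1) * a ≤ M) :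
    (YY n 1 a (M + n + 1)).ncard = ∑ r : Fin (n + 1) → Fin a,
      if a ∣ M - ∑ i, (r i : ℕ) then (2 * ((M - ∑ i, (r i : ℕ)) / a)) ^ n else 0 := by
  let T : (Fin (n + 1) → Fin a) →
      Set (Equiv.Perm (Fin n) × (Fin n → Bool) × (Fin (n + 1) → ℕ)) := fun r =>
    {y | ∑ i, (r i : ℕ) + a * ∑ i, y.2.2 i = M ∧ ∀ i : Fin (n + 1),
      0 + (if UU y.1 y.2.1 i.castSucc < UU y.1 y.2.1 i.succ then 0 else 1) ≤ y.2.2 i}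
  have hr : ∀ r : Fin (n + 1) → Fin a, ∑ i, (r i : ℕ) ≤ M := fun r => by
    refine le_trans (Finset.sum_le_card_nsmul _ _ a (fun i _ => (r i).2.le)) ?_
    simpa using hM
  have hT : ∀ r, ((a ∣ M - ∑ i, (r i : ℕ)) ∧ T r = YY n 0 1 ((M - ∑ i, (r i : ℕ)) / a)) ∨
      (¬ (a ∣ M - ∑ i, (r i : ℕ)) ∧ T r = ∅) := by
    intro r
    have h1 := hr r
    by_cases h : a ∣ M - ∑ i, (r i : ℕ)
    · left
      refine ⟨h, ?_⟩
      ext ⟨σ, e, d⟩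
      simp only [T, YY, Set.mem_ofPred_eq]
      apply and_congr_left'
      rw [eq_comm (b := _ / a), Nat.div_eq_iff_eq_mul_right ha h]
      omega
    · right
      refine ⟨h, ?_⟩
      rw [Set.eq_empty_iff_forall_notMem]
      rintro ⟨σ, e, d⟩ ⟨h2, -⟩
      exact h ⟨∑ i, d i, by simp only at h2; omega⟩
  have hfin : ∀ r, Finite (T r) := by
    intro r
    rcases hT r with h | h
    · rw [h.2]; exact (YY_finite _ _ _ _).to_subtype
    · rw [h.2]; infer_instance
  have e1 : (YY n 1 a (M + n + 1)).ncard = Nat.card (Σ r, T r) := by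
    rw [← Nat.card_coe_set_eq]
    symm
    have val : ∀ (r : Fin (n + 1) → Fin a) (d : Fin (n + 1) → ℕ), 
        ∑ i, (1 + (r i : ℕ) + a * d i) = n + 1 + (∑ i, (r i : ℕ) + a * ∑ i, d i) := by
      intro r d
      rw [Finset.sum_add_distrib, Finset.sum_add_distrib, Finset.mul_sum]
      simp
      ring
    refine Nat.card_congr (Equiv.ofBijective (fun t => ⟨(t.2.1.1, t.2.1.2.1,
      fun i => 1 + (t.1 i : ℕ) + a * t.2.1.2.2 i), ?_⟩) ⟨?_, ?_⟩)
    · obtain ⟨r, ⟨σ, e, d⟩, h1, h2⟩ := t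
      refine ⟨?_, ?_⟩
      · simp only [val]
        change _ + a * ∑ i, d i = M at h1
        omega
      · intro i
        have := h2 i
        simp only at this ⊢
        split_ifs at this ⊢
        · omega
        · nlinarith
    · rintro ⟨r, ⟨σ, e, d⟩, h1⟩ ⟨r', ⟨σ', e', d'⟩, h1'⟩ h
      simp only [Subtype.mk.injEq, Prod.mk.injEq] at h
      obtain ⟨rfl, rfl, h⟩ := h
      have h' : ∀ i, (r i : ℕ) + a * d i = r' i + a * d' i := fun i => by
        have := congrFun h i
        omega
      have : r = r' := by
        funext i
        have := congrArg (· % a) (h' i)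
        simp only [Nat.add_mul_mod_self_left, Nat.mod_eq_of_lt (Fin.is_lt _)] at this
        exact Fin.ext this
      subst this
      have : d = d' := by
        funext i
        have := h' i
        exact Nat.eq_of_mul_eq_mul_left ha (by omega)
      subst this
      rfl
    · rintro ⟨⟨σ, e, d⟩, h1, h2⟩
      simp only at h1 h2
      have hd : ∀ i, 1 + (d i - 1) % a + a * ((d i - 1) / a) = d i := fun i => by
        have := h2 i
        have := Nat.mod_add_div (d i - 1) a
        omega
      refine ⟨⟨fun i => ⟨(d i - 1) % a, Nat.mod_lt _ ha⟩,
        ⟨(σ, e, fun i => (d i - 1) / a), ?_, ?_⟩⟩, ?_⟩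
      · have := val (fun i => ⟨(d i - 1) % a, Nat.mod_lt _ ha⟩) (fun i => (d i - 1) / a)
        simp only [hd] at this
        simp only
        omega
      · intro i
        have := h2 i
        simp only at this ⊢
        split_ifs at this ⊢
        · exact Nat.zero_le _
        · rw [zero_add, Nat.one_le_div_iff ha]
          omega
      · simp only [hd]
  rw [e1, Nat.card_sigma]
  refine Finset.sum_congr rfl fun r _ => ?_
  rw [Nat.card_coe_set_eq]
  rcases hT r with h | h
  · rw [if_pos h.1, h.2, card_YY_box hn]
  · rw [if_neg h.1, h.2, Set.ncard_empty]

theorem cong_iff {q : ℕ} {z k : ℤ} (h1 : -2 * (q : ℤ) < z - k) (h2 : z - k < q) :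
    ((z : ZMod q) = (k : ZMod q)) ↔ (z = k ∨ z = k - q) := by
  rw [ZMod.intCast_eq_intCast_iff_dvd_sub]
  constructor
  · rintro ⟨t, ht⟩
    have a1 : t < 2 := by nlinarith
    have a2 : -1 < t := by nlinarith
    have : t = 0 ∨ t = 1 := by omega
    rcases this with rfl | rfl
    · left; omega
    · right; omega
  · rintro (rfl | rfl)
    · simp
    · simp

def sg (t : ℕ × Bool) : ℤ := if t.2 then (t.1 : ℤ) else -(t.1 : ℤ)

theorem sg_true (p : ℕ) : sg (p, true) = p := rfl
theorem sg_false (p : ℕ) : sg (p, false) = -(p : ℤ) := rfl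

/-- the conditions of `W` for integer representatives -/
def WC (n q a : ℕ) (v : Fin n → ℤ) : Prop :=
    (∀ i, ∀ k : ℤ, 0 ≤ k → k ≤ (a : ℤ) → (v i : ZMod q) ≠ (k : ZMod q)) ∧
    (∀ i, ∀ k : ℤ, Odd k → 1 ≤ k → k ≤ 2 * (a : ℤ) - 1 → 2 * (v i : ZMod q) ≠ (k : ZMod q)) ∧
    (∀ i j : Fin n, i < j → ∀ k : ℤ, 0 ≤ k → k ≤ (a : ℤ) →
      (v i : ZMod q) - (v j : ZMod q) ≠ (k : ZMod q) ∧ (v i : ZMod q) + (v j : ZMod q) ≠ (k : ZMod q))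

theorem one_iff {n q a m : ℕ} (hq : q = 2 * m + 1) (hm : 2 * a + 1 ≤ m) (i : Fin n)
    (t : ℕ × Bool) (ht : t.1 ≤ m) :
    ((∀ k : ℤ, 0 ≤ k → k ≤ (a : ℤ) → (sg t : ZMod q) ≠ (k : ZMod q)) ∧
    (∀ k : ℤ, Odd k → 1 ≤ k → k ≤ 2 * (a : ℤ) - 1 → 2 * (sg t : ZMod q) ≠ (k : ZMod q))) ↔
    (RR 1 a (0, 0) (t.1, lab i t.2) ∧ RR 1 a (t.1, lab i t.2) (m + 1, 0)) := by
  obtain ⟨p, b⟩ := t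
  have hi := i.2
  simp only at ht
  have e : 2 * ((sg (p, b) : ℤ) : ZMod q) = ((2 * sg (p, b) : ℤ) : ZMod q) := by push_cast; rfl
  rw [e]
  constructor
  · rintro ⟨h1, h2⟩
    cases b
    · simp only [sg_false, lab_false, RR] at *
      have c1 := h1 0 le_rfl (by omega)
      rw [Ne, cong_iff (by omega) (by omega)] at c1
      by_cases hp : m + 1 ≤ p + a
      · exfalso
        have c2 := h2 (q - 2 * p) ⟨m - p, by omega⟩ (by omega) (by omega)
        rw [Ne, cong_iff (by omega) (by omega)] at c2
        omega
      · omega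
    · simp only [sg_true, lab_true, RR] at *
      by_cases hp : p ≤ a
      · exfalso
        exact h1 p (by omega) (by omega) rfl
      · omega
  · rintro ⟨h1, h2⟩
    constructor
    · intro k k1 k2
      rw [Ne, cong_iff] <;> cases b <;> simp only [sg_true, sg_false, lab_true, lab_false, RR] at * <;> omega
    · rintro k ⟨k0, hk0⟩ k1 k2
      rw [Ne, cong_iff] <;> cases b <;> simp only [sg_true, sg_false, lab_true, lab_false, RR] at * <;> omega

theorem two_iff {n q a m : ℕ} (hq : q = 2 * m + 1) (hm : 2 * a + 1 ≤ m) (i j : Fin n) (hij : i < j)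
    (t s : ℕ × Bool) (ht : t.1 ≤ m) (hs : s.1 ≤ m)
    (h1 : RR 1 a (0, 0) (t.1, lab i t.2) ∧ RR 1 a (t.1, lab i t.2) (m + 1, 0))
    (h2 : RR 1 a (0, 0) (s.1, lab j s.2) ∧ RR 1 a (s.1, lab j s.2) (m + 1, 0)) :
    (∀ k : ℤ, 0 ≤ k → k ≤ (a : ℤ) →
      (sg t : ZMod q) - (sg s : ZMod q) ≠ (k : ZMod q) ∧
      (sg t : ZMod q) + (sg s : ZMod q) ≠ (k : ZMod q)) ↔
    (RR 1 a (t.1, lab i t.2) (s.1, lab j s.2) ∨ RR 1 a (s.1, lab j s.2) (t.1, lab i t.2)) := by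
  obtain ⟨p, b⟩ := t
  obtain ⟨r, c⟩ := s
  have hi := i.2
  have hj := j.2
  have hij' : (i : ℕ) < j := hij
  simp only at ht hs
  rw [← Int.cast_sub, ← Int.cast_add]
  constructor
  · intro h
    by_contra hcon
    have A := h (sg (p, b) - sg (r, c))
    have B := h (sg (p, b) + sg (r, c))
    simp only [ne_eq, not_true_eq_false, false_and, and_false, imp_false] at A B
    cases b <;> cases c <;> simp only [sg_true, sg_false, lab_true, lab_false, RR] at * <;> omega
  · intro h k k1 k2
    constructor
    · rw [Ne, cong_iff] <;> cases b <;> cases c <;> simp only [sg_true, sg_false, lab_true, lab_false, RR] at * <;> omega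
    · rw [Ne, cong_iff] <;> cases b <;> cases c <;> simp only [sg_true, sg_false, lab_true, lab_false, RR] at * <;> omega

theorem WC_iff {n q a m : ℕ} (hq : q = 2 * m + 1) (hm : 2 * a + 1 ≤ m)
    (x : Fin n → ℕ × Bool) (hx : ∀ i, (x i).1 ≤ m) :
    WC n q a (fun i => sg (x i)) ↔ x ∈ XX n 1 a (m + 1) := by
  constructor
  · rintro ⟨h1, h2, h3⟩
    have A := fun i => (one_iff hq hm i (x i) (hx i)).1 ⟨h1 i, h2 i⟩
    refine ⟨fun i => (A i).1, fun i => (A i).2, fun i j hij => ?_⟩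
    rcases lt_or_gt_of_ne hij with h | h
    · exact (two_iff hq hm i j h (x i) (x j) (hx i) (hx j) (A i) (A j)).1 (h3 i j h)
    · exact ((two_iff hq hm j i h (x j) (x i) (hx j) (hx i) (A j) (A i)).1 (h3 j i h)).symm
  · rintro ⟨h1, h2, h3⟩
    have A := fun i => (one_iff hq hm i (x i) (hx i)).2 ⟨h1 i, h2 i⟩
    refine ⟨fun i => (A i).1, fun i => (A i).2, fun i j hij => ?_⟩
    exact (two_iff hq hm i j hij (x i) (x j) (hx i) (hx j) ⟨h1 i, h2 i⟩ ⟨h1 j, h2 j⟩).2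
      (h3 i j hij.ne)

theorem XX_le {n a m : ℕ} (x : Fin n → ℕ × Bool) (hx : x ∈ XX n 1 a (m + 1)) (i : Fin n) :
    (x i).1 ≤ m ∧ 1 ≤ (x i).1 := by
  have h1 := hx.1 i
  have h2 := hx.2.1 i
  simp only [RR, pt] at h1 h2
  omega

theorem card_W {n q a m : ℕ} (hq : q = 2 * m + 1) (hm : 2 * a + 1 ≤ m) :
    W n q a = (XX n 1 a (m + 1)).ncard := by
  symm
  have hW : ∀ v : Fin n → ℤ, (fun i => (v i : ZMod q)) ∈ {x : Fin n → ZMod q |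
    (∀ i, ∀ k : ℤ, 0 ≤ k → k ≤ (a : ℤ) → x i ≠ (k : ZMod q)) ∧
    (∀ i, ∀ k : ℤ, Odd k → 1 ≤ k → k ≤ 2 * (a : ℤ) - 1 → 2 * x i ≠ (k : ZMod q)) ∧
    (∀ i j : Fin n, i < j → ∀ k : ℤ, 0 ≤ k → k ≤ (a : ℤ) →
      x i - x j ≠ (k : ZMod q) ∧ x i + x j ≠ (k : ZMod q))} ↔ WC n q a v := fun v => Iff.rfl
  refine Set.ncard_congr (fun x _ => fun i => (sg (x i) : ZMod q)) ?_ ?_ ?_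
  · intro x hx
    exact (hW _).2 ((WC_iff hq hm x (fun i => (XX_le x hx i).1)).2 hx)
  · intro x y hx hy hxy
    funext i
    have h := congrFun hxy i
    have h1 := XX_le x hx i
    have h2 := XX_le y hy i
    generalize x i = t at *
    generalize y i = s at *
    obtain ⟨p, b⟩ := t
    obtain ⟨r, c⟩ := s
    rw [cong_iff] at h <;> cases b <;> cases c <;> simp only [sg_true, sg_false, Prod.mk.injEq] at * <;>
      (try simp) <;> omega
  · intro x hx
    have : NeZero q := ⟨by omega⟩
    let y : Fin n → ℕ × Bool := fun i => ((x i).valMinAbs.natAbs, decide (0 ≤ (x i).valMinAbs))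
    have hy : ∀ i, sg (y i) = (x i).valMinAbs := by
      intro i
      simp only [y, sg, decide_eq_true_eq]
      split_ifs <;> omega
    have hy2 : (fun i => ((sg (y i) : ℤ) : ZMod q)) = x := by
      funext i
      rw [hy, ZMod.coe_valMinAbs]
    have hle : ∀ i, (y i).1 ≤ m := by
      intro i
      have := ZMod.natAbs_valMinAbs_le (x i)
      simp only [y]
      omega
    refine ⟨y, ?_, hy2⟩
    rw [← WC_iff hq hm y hle, ← hW, hy2]
    exact hx

theorem polysum_eq (n a q : ℕ) : polysum (X ^ (2 * n + 1) * (phi2 a) ^ (n + 1)) q n =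
    ∑ r : Fin (n + 1) → Fin a, ((q : ℚ) - (2 * n + 1 + 2 * ∑ i, (r i : ℕ) : ℕ)) ^ n := by
  let F : ℚ[X] →ₗ[ℚ] ℚ := Polynomial.lsum (fun k => (((q : ℚ) - (k : ℚ)) ^ n) • LinearMap.id)
  have hF : ∀ g, polysum g q n = F g := by
    intro g
    simp only [F, polysum, Polynomial.lsum_apply]
    rw [Polynomial.sum_over_range]
    · simp [mul_comm]
    · simp
  have hX : ∀ k : ℕ, F ((X : ℚ[X]) ^ k) = ((q : ℚ) - (k : ℚ)) ^ n := by
    intro k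
    simp only [F, Polynomial.lsum_apply]
    rw [← Polynomial.monomial_one_right_eq_X_pow, Polynomial.sum_monomial_index]
    · simp
    · simp
  have hg : (X ^ (2 * n + 1) * (phi2 a) ^ (n + 1) : ℚ[X]) =
      ∑ r : Fin (n + 1) → Fin a, X ^ (2 * n + 1 + 2 * ∑ i, (r i : ℕ)) := by
    rw [phi2, Finset.sum_range, Fintype.sum_pow, Finset.mul_sum]
    refine Finset.sum_congr rfl fun r _ => ?_
    rw [Finset.prod_pow_eq_pow_sum, ← Finset.mul_sum, ← pow_add]
  rw [hF, hg, map_sum]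
  exact Finset.sum_congr rfl fun r _ => hX _

theorem kill (a : ℕ) (N : ℕ) : ∀ (c : ℤ → ℚ), (∀ x, c (x + a) = c x) →
    (∀ x, ∑ i : Fin a, c (x - (i : ℕ)) = 0) → ∀ k < N, ∀ x : ℤ,
    ∑ r : Fin N → Fin a, c (x - ∑ i, ((r i : ℕ) : ℤ)) * ((x - ∑ i, ((r i : ℕ) : ℤ) : ℤ) : ℚ) ^ k = 0 := by
  induction N with
  | zero => intro c _ _ k hk; omega
  | succ N ih =>
    intro c hc hs k hk x
    rw [← (Fin.consEquiv (fun _ => Fin a)).sum_comp, Fintype.sum_prod_type_right]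
    simp only [Fin.consEquiv_apply, Fin.sum_univ_succ, Fin.cons_zero, Fin.cons_succ]
    have step : ∀ y : ℤ, ∑ i : Fin a, c (y - (i : ℕ)) * ((y - (i : ℕ) : ℤ) : ℚ) ^ k =
        ∑ i : Fin a, ∑ l ∈ Finset.range k,
          (c (y - (i : ℕ)) * (y : ℚ) ^ l) * ((-(i : ℕ) : ℚ) ^ (k - l) * (k.choose l : ℚ)) := by
      intro y
      have : ∀ i : Fin a, c (y - (i : ℕ)) * ((y - (i : ℕ) : ℤ) : ℚ) ^ k =
          c (y - (i : ℕ)) * (y : ℚ) ^ k + ∑ l ∈ Finset.range k,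
          (c (y - (i : ℕ)) * (y : ℚ) ^ l) * ((-(i : ℕ) : ℚ) ^ (k - l) * (k.choose l : ℚ)) := by
        intro i
        push_cast
        rw [sub_eq_add_neg (y : ℚ), add_pow, Finset.sum_range_succ, mul_add, add_comm, Finset.mul_sum]
        congr 1
        · simp
        · refine Finset.sum_congr rfl fun l _ => ?_
          ring
      rw [Finset.sum_congr rfl fun i _ => this i, Finset.sum_add_distrib, ← Finset.sum_mul, hs,
        zero_mul, zero_add]
    have step2 : ∀ y : Fin N → Fin a, (∑ i : Fin a,
        c (x - (((i : ℕ) : ℤ) + ∑ j, ((y j : ℕ) : ℤ))) *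
          ((x - (((i : ℕ) : ℤ) + ∑ j, ((y j : ℕ) : ℤ)) : ℤ) : ℚ) ^ k) = 
        ∑ i : Fin a, ∑ l ∈ Finset.range k,
          (c ((x - ∑ j, ((y j : ℕ) : ℤ)) - (i : ℕ)) * ((x - ∑ j, ((y j : ℕ) : ℤ) : ℤ) : ℚ) ^ l)
            * ((-(i : ℕ) : ℚ) ^ (k - l) * (k.choose l : ℚ)) := by
      intro y
      rw [← step]
      refine Finset.sum_congr rfl fun i _ => ?_
      have : x - (((i : ℕ) : ℤ) + ∑ j, ((y j : ℕ) : ℤ)) = 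
        (x - ∑ j, ((y j : ℕ) : ℤ)) - (i : ℕ) := by ring
      rw [this]
    rw [Finset.sum_congr rfl fun y _ => step2 y, Finset.sum_comm]
    refine Finset.sum_eq_zero fun i _ => ?_
    rw [Finset.sum_comm]
    refine Finset.sum_eq_zero fun l hl => ?_
    rw [← Finset.sum_mul]
    rw [ih (fun z => c (z - (i : ℕ))) ?_ ?_ l (by have := Finset.mem_range.1 hl; omega) x, zero_mul]
    · intro z
      rw [← hc (z - (i : ℕ))]
      congr 1; ring
    · intro z
      rw [← hs (z - (i : ℕ))]
      refine Finset.sum_congr rfl fun j _ => ?_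
      congr 1; ring

theorem sum_ind (a : ℕ) (ha : 1 ≤ a) (x : ℤ) :
    ∑ i : Fin a, (if (a : ℤ) ∣ x - (i : ℕ) then (a : ℚ) else 0) = a := by
  have hpos : (0 : ℤ) < a := by omega
  have h1 := Int.emod_nonneg x hpos.ne'
  have h2 := Int.emod_lt_of_pos x hpos
  let i0 : Fin a := ⟨(x % a).toNat, by omega⟩
  rw [Finset.sum_eq_single i0]
  · rw [if_pos]
    simp only [i0]
    rw [Int.toNat_of_nonneg h1]
    exact Int.dvd_self_sub_emod
  · intro i _ hi
    rw [if_neg]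
    intro h
    apply hi
    ext
    simp only [i0]
    have : x % a = ((i : ℕ) : ℤ) % a := Int.emod_eq_emod_iff_emod_sub_eq_zero.2 (Int.emod_eq_zero_of_dvd h)
    rw [Int.emod_eq_of_lt (by omega : (0 : ℤ) ≤ (i : ℕ)) (by omega)] at this
    omega
  · simp

theorem main_alg (n a M : ℕ) (ha : 1 ≤ a) (hM : (n + 1) * a ≤ M) :
    (a : ℚ) ^ (n + 1) * ((∑ r : Fin (n + 1) → Fin a,
      if a ∣ M - ∑ i, (r i : ℕ) then (2 * ((M - ∑ i, (r i : ℕ)) / a)) ^ n else 0 : ℕ) : ℚ) =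
    ∑ r : Fin (n + 1) → Fin a, ((2 * (M + n) + 1 : ℕ) - (2 * n + 1 + 2 * ∑ i, (r i : ℕ) : ℕ) : ℚ) ^ n := by
  have hr : ∀ r : Fin (n + 1) → Fin a, ∑ i, (r i : ℕ) ≤ M := fun r => by
    refine le_trans (Finset.sum_le_card_nsmul _ _ a (fun i _ => (r i).2.le)) ?_
    simpa using hM
  have hk := kill a (n + 1) (fun x => (if (a : ℤ) ∣ x then (a : ℚ) else 0) - 1) ?_ ?_ n (by omega) M
  · rw [← sub_eq_zero, ← mul_zero ((2 : ℚ) ^ n), ← hk, Nat.cast_sum, Finset.mul_sum, Finset.mul_sum,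
      ← Finset.sum_sub_distrib]
    refine Finset.sum_congr rfl fun r _ => ?_
    have h1 := hr r
    have e1 : ((M : ℤ) - ∑ i, ((r i : ℕ) : ℤ)) = ((M - ∑ i, (r i : ℕ) : ℕ) : ℤ) := by
      rw [Nat.cast_sub h1]; push_cast; rfl
    have e2 : ((2 * (M + n) + 1 : ℕ) - (2 * n + 1 + 2 * ∑ i, (r i : ℕ) : ℕ) : ℚ) =
        2 * ((M - ∑ i, (r i : ℕ) : ℕ) : ℚ) := by
      rw [Nat.cast_sub h1]; push_cast; ring
    rw [e1, e2]
    generalize M - ∑ i, (r i : ℕ) = K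
    simp only [Int.natCast_dvd_natCast, Int.cast_natCast]
    split_ifs with h
    · obtain ⟨t, rfl⟩ := h
      rw [Nat.mul_div_cancel_left _ ha]
      push_cast
      ring
    · push_cast
      ring
  · intro x
    simp
  · intro x
    rw [Finset.sum_sub_distrib, sum_ind a ha]
    simp

/-- Proposition 6.1, case `a = b = c`. For all large odd `q`, the
number of points avoiding the arrangement `x_i = 0,...,a`; `2x_i = 1,3,...,2a-1`;
`x_i ± x_j = 0,...,a` equals `(1/a^(n+1)) ∑_k g_k (q-k)^n`, where
`g = y^(2n+1) (1 + y^2 + ... + y^(2a-2))^(n+1)`. -/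
theorem statement17 (n a : ℕ) (hn : 1 ≤ n) (ha : 1 ≤ a) :
    ∃ N : ℕ, ∀ q : ℕ, Odd q → N < q →
      (W n q a : ℚ) =
        (1 / (a : ℚ) ^ (n + 1)) * polysum (X ^ (2 * n + 1) * (phi2 a) ^ (n + 1)) q n := by
  refine ⟨2 * ((n + 1) * a + n + 2 * a + 1) + 1, fun q hq hN => ?_⟩
  obtain ⟨m, hm⟩ := hq
  obtain ⟨M, rfl⟩ : ∃ M, m = M + n := ⟨m - n, by omega⟩
  have hM : (n + 1) * a ≤ M := by omega
  have hW : W n q a = _ := card_W hm (by omega)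
  rw [← card_ZZ_XX hn _ _ _ ha, ← card_YY_ZZ, card_YY_mod hn ha hM] at hW
  have ha0 : (a : ℚ) ^ (n + 1) ≠ 0 := pow_ne_zero _ (by exact_mod_cast (by omega : a ≠ 0))
  rw [polysum_eq, hW, one_div, eq_inv_mul_iff_mul_eq₀ ha0, main_alg n a M ha hM, hm]
end

section
/- Let n \ge 2 and a \ge 1 be integers, and write (1 + y + y^2 + ... + y^a)^n = \sum_{k=0}^{na} c_k y^k. Then every complex root of the polynomial P(X) := \sum_{k=0}^{na} c_k (X - k)^{n-1} \in \mathbb{C}[X] has real part equal to na/2. -/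
open Polynomial

lemma aux_prod (u v : ℂ) (s : Multiset ℂ) (h : ∀ ρ ∈ s, ‖u - ρ‖ < ‖v - ρ‖) :
    ‖(s.map (fun ρ => u - ρ)).prod‖ ≤ ‖(s.map (fun ρ => v - ρ)).prod‖ ∧
    (s ≠ 0 → ‖(s.map (fun ρ => u - ρ)).prod‖ < ‖(s.map (fun ρ => v - ρ)).prod‖) := by
  induction s using Multiset.induction_on with
  | empty => simp
  | cons b s ih =>
    have h1 := h b (Multiset.mem_cons_self b s)
    have h2 : ∀ ρ ∈ s, ‖u - ρ‖ < ‖v - ρ‖ := fun ρ hρ => h ρ (Multiset.mem_cons_of_mem hρ)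
    have h3 := (ih h2).1
    have hpos : 0 < ‖(s.map (fun ρ => v - ρ)).prod‖ := by
      rw [norm_pos_iff]
      intro h0
      rw [Multiset.prod_eq_zero_iff, Multiset.mem_map] at h0
      obtain ⟨ρ, hρ, h0⟩ := h0
      have := h2 ρ hρ
      rw [h0, norm_zero] at this
      exact absurd this (not_lt.mpr (norm_nonneg _))
    have key : ‖((b ::ₘ s).map (fun ρ => u - ρ)).prod‖ <
        ‖((b ::ₘ s).map (fun ρ => v - ρ)).prod‖ := by
      simp only [Multiset.map_cons, Multiset.prod_cons, norm_mul]
      exact lt_of_le_of_lt (mul_le_mul_of_nonneg_left h3 (norm_nonneg _))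
        (mul_lt_mul_of_pos_right h1 hpos)
    exact ⟨key.le, fun _ => key⟩

lemma aux_eval (f : ℂ[X]) (u : ℂ) :
    f.eval u = f.leadingCoeff * (f.roots.map (fun ρ => u - ρ)).prod := by
  have h := (IsAlgClosed.splits f).eq_prod_roots
  conv_lhs => rw [h]
  simp [eval_multiset_prod, Multiset.map_map]

lemma aux_norm (u v : ℂ) (r : ℝ) (f : ℂ[X]) (hf : f ≠ 0) (hr : ∀ z, f.eval z = 0 → z.re = r)
    (h : ∀ ρ : ℂ, ρ.re = r → ‖u - ρ‖ < ‖v - ρ‖) (hd : f.roots ≠ 0) :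
    ‖f.eval u‖ < ‖f.eval v‖ := by
  rw [aux_eval f u, aux_eval f v, norm_mul, norm_mul]
  have := (aux_prod u v f.roots (fun ρ hρ => h ρ (hr ρ (by
    rw [mem_roots hf] at hρ; exact hρ)))).2 hd
  exact mul_lt_mul_of_pos_left this (by simpa using hf)

lemma aux_lt (w : ℂ) : (1/2 < w.re → ‖w - 1‖ < ‖w‖) ∧ (w.re < 1/2 → ‖w‖ < ‖w - 1‖) := by
  constructor <;> intro h <;> rw [← sq_lt_sq₀ (norm_nonneg _) (norm_nonneg _),
    ← Complex.normSq_eq_norm_sq, ← Complex.normSq_eq_norm_sq, Complex.normSq_apply,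
    Complex.normSq_apply] <;> simp <;> nlinarith

/-- the shift operator `f(x) ↦ f(x - 1)` -/
noncomputable def shiftT : ℂ[X] →ₗ[ℂ] ℂ[X] := (aeval (X - 1 : ℂ[X])).toLinearMap

lemma shiftT_eval (f : ℂ[X]) (z : ℂ) : (shiftT f).eval z = f.eval (z - 1) := by
  change (aeval (X - 1 : ℂ[X]) f).eval z = _
  rw [← comp_eq_aeval]
  simp

lemma shiftT_pow_eval (k : ℕ) (f : ℂ[X]) (z : ℂ) :
    ((shiftT ^ k) f).eval z = f.eval (z - k) := by
  induction k generalizing z with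
  | zero => simp
  | succ k ih =>
    rw [pow_succ', Module.End.mul_apply, shiftT_eval, ih]
    push_cast
    congr 1
    ring

lemma aux_step (ω : ℂ) (h1 : ‖ω‖ = 1) (h2 : ω ≠ 1) (r : ℝ) (f : ℂ[X]) (hf : f ≠ 0)
    (hr : ∀ z, f.eval z = 0 → z.re = r) :
    shiftT f - ω • f ≠ 0 ∧ ∀ z, (shiftT f - ω • f).eval z = 0 → z.re = r + 1/2 := by
  have key : ∀ z, (shiftT f - ω • f).eval z = 0 → z.re = r + 1/2 := by
    intro z hz
    rw [eval_sub, shiftT_eval, eval_smul, smul_eq_mul, sub_eq_zero] at hz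
    by_cases hd : f.roots = 0
    · exfalso
      rw [aux_eval f (z - 1), aux_eval f z, hd] at hz
      simp only [Multiset.map_zero, Multiset.prod_zero, mul_one] at hz
      have hl : f.leadingCoeff ≠ 0 := leadingCoeff_ne_zero.mpr hf
      exact h2 (mul_right_cancel₀ hl (by rw [one_mul]; exact hz.symm))
    · have hn : ‖f.eval (z - 1)‖ = ‖f.eval z‖ := by rw [hz, norm_mul, h1, one_mul]
      rcases lt_trichotomy z.re (r + 1/2) with h | h | h
      · have := aux_norm z (z - 1) r f hf hr (fun ρ hρ => by
          have := (aux_lt (z - ρ)).2 (by simp [hρ]; linarith)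
          rwa [sub_right_comm] at this) hd
        linarith
      · exact h
      · have := aux_norm (z - 1) z r f hf hr (fun ρ hρ => by
          have := (aux_lt (z - ρ)).1 (by simp [hρ]; linarith)
          rwa [sub_right_comm] at this) hd
        linarith
  refine ⟨fun h0 => ?_, key⟩
  have := key ((r : ℂ)) (by rw [h0]; simp)
  simp at this

lemma aux_iter (s : Multiset ℂ) (hs : ∀ ω ∈ s, ‖ω‖ = 1 ∧ ω ≠ 1) (f : ℂ[X]) (hf : f ≠ 0)
    (hr : ∀ z, f.eval z = 0 → z.re = 0) :
    aeval shiftT (s.map (fun ω => X - C ω)).prod f ≠ 0 ∧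
    ∀ z, (aeval shiftT (s.map (fun ω => X - C ω)).prod f).eval z = 0 →
      z.re = (s.card : ℝ) / 2 := by
  induction s using Multiset.induction_on with
  | empty => simpa using ⟨hf, hr⟩
  | cons b s ih =>
    obtain ⟨i1, i2⟩ := ih (fun ω hω => hs ω (Multiset.mem_cons_of_mem hω))
    obtain ⟨b1, b2⟩ := hs b (Multiset.mem_cons_self b s)
    have := aux_step b b1 b2 _ _ i1 i2
    rw [Multiset.map_cons, Multiset.prod_cons, map_mul, Module.End.mul_apply]
    simp only [map_sub, aeval_X, aeval_C, LinearMap.sub_apply, Module.algebraMap_end_apply]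
    refine ⟨this.1, fun z hz => ?_⟩
    rw [this.2 z hz, Multiset.card_cons]
    push_cast
    ring

/-- the "Riemann hypothesis" for the extended Linial arrangement of
type `A_{n-1}`. Writing `(1 + y + ... + y^a)^n = ∑ c_k y^k`, every complex root of
`∑_k c_k (X - k)^(n-1)` has real part `na/2`. -/
theorem statement18 (n a : ℕ) (hn : 2 ≤ n) (ha : 1 ≤ a)
    (c : ℕ → ℂ)
    (hc : ∀ k, c k = (((∑ j ∈ Finset.range (a + 1), (X : ℂ[X]) ^ j)) ^ n).coeff k) :
    ∀ z : ℂ,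
      (∑ k ∈ Finset.range (n * a + 1), C (c k) * (X - C (k : ℂ)) ^ (n - 1)).eval z = 0 →
      z.re = (n : ℝ) * (a : ℝ) / 2 := by
  intro z hz
  set G : ℂ[X] := ∑ j ∈ Finset.range (a + 1), (X : ℂ[X]) ^ j with hG
  have hGm : G.Monic := monic_geom_sum_X (by omega)
  have hGd : G.natDegree = a := by
    have h := congrArg natDegree (geom_sum_mul (X : ℂ[X]) (a + 1))
    have h1 : (X - 1 : ℂ[X]).Monic := monic_X_sub_C (1 : ℂ)
    have h2 : (X - 1 : ℂ[X]).natDegree = 1 := natDegree_X_sub_C (1 : ℂ)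
    have h3 : (X ^ (a + 1) - 1 : ℂ[X]).natDegree = a + 1 := natDegree_X_pow_sub_C (r := (1 : ℂ))
    rw [← hG, hGm.natDegree_mul h1, h2, h3] at h
    omega
  have hQm : (G ^ n).Monic := hGm.pow n
  have hQd : (G ^ n).natDegree = n * a := by rw [hGm.natDegree_pow, hGd]
  have hQs := IsAlgClosed.splits (G ^ n)
  have hprod := hQs.eq_prod_roots
  rw [hQm.leadingCoeff, C_1, one_mul] at hprod
  have hcard : (G ^ n).roots.card = n * a := by rw [← hQs.natDegree_eq_card_roots, hQd]
  have hroots : ∀ ω ∈ (G ^ n).roots, ‖ω‖ = 1 ∧ ω ≠ 1 := by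
    intro ω hω
    have h0 : G.eval ω = 0 := by
      have := (mem_roots hQm.ne_zero).1 hω
      rw [IsRoot, eval_pow] at this
      exact pow_eq_zero_iff (by omega) |>.1 this
    have h0' : ∑ j ∈ Finset.range (a + 1), ω ^ j = 0 := by
      simpa [hG, eval_finsetSum] using h0
    constructor
    · have h := geom_sum_mul ω (a + 1)
      rw [h0', zero_mul] at h
      exact Complex.norm_eq_one_of_pow_eq_one (sub_eq_zero.1 h.symm) (by omega)
    · rintro rfl
      simp at h0'
      exact absurd h0' (by exact_mod_cast Nat.succ_ne_zero a)
  have main := (aux_iter (G ^ n).roots hroots (X ^ (n - 1)) (pow_ne_zero _ X_ne_zero) (by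
    intro w hw
    rw [eval_pow, eval_X] at hw
    rw [pow_eq_zero_iff (by omega) |>.1 hw]
    simp)).2 z
  rw [← hprod, hcard] at main
  rw [main ?_]
  · push_cast; ring
  · rw [← hz, aeval_eq_sum_range, hQd]
    simp only [LinearMap.sum_apply, LinearMap.smul_apply, eval_finsetSum, eval_smul,
      shiftT_pow_eval, ← hc]
    simp
end

section
/- Let n \ge 2 and a \ge 1 be integers. Define g(y) := y \cdot (1 + y^2 + y^4 + ... + y^{2a})^n \cdot (1 + y^2 + y^4 + ... + y^{a-1}) if a is odd, and g(y) := (1 + y^2 + y^4 + ... + y^{2a})^n \cdot (1 + y + y^2 + ... + y^a) if a is even; write g = \sum_k g_k y^k. Then every complex root of the polynomial P(X) := \sum_k g_k (X - k)^n \in \mathbb{C}[X] has real part equal to na + (a+1)/2 if a is odd, and equal to na + a/2 if a is even (in both cases, na + \lceil a/2 \rceil). -/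
open Polynomial

/-- `1 + y^2 + y^4 + ... + y^(2(m-1))`, over `ℂ`. -/
noncomputable def phi2C (m : ℕ) : ℂ[X] := ∑ i ∈ Finset.range m, X ^ (2 * i)

/-- `1 + y + y^2 + ... + y^(m-1)`, over `ℂ`. -/
noncomputable def phiC (m : ℕ) : ℂ[X] := ∑ i ∈ Finset.range m, X ^ i

/-- For `g = ∑_k g_k y^k`, the polynomial `∑_k g_k (X - k)^n`. -/
noncomputable def shiftPoly (g : ℂ[X]) (n : ℕ) : ℂ[X] :=
  ∑ k ∈ Finset.range (g.natDegree + 1), C (g.coeff k) * (X - C (k : ℂ)) ^ n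

/-- The backward shift operator `f(x) ↦ f(x-1)`. -/
noncomputable def shiftOp : Module.End ℂ ℂ[X] := (taylor (-1 : ℂ) : ℂ[X] →ₗ[ℂ] ℂ[X])

lemma shiftOp_eval (f : ℂ[X]) (z : ℂ) : (shiftOp f).eval z = f.eval (z - 1) := by
  simp [shiftOp, taylor_eval, sub_eq_add_neg]

lemma shiftOp_pow_eval (k : ℕ) (f : ℂ[X]) (z : ℂ) :
    ((shiftOp ^ k) f).eval z = f.eval (z - k) := by
  induction k generalizing z with
  | zero => simp
  | succ k ih =>
    rw [pow_succ', Module.End.mul_apply, shiftOp_eval, ih]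
    congr 1
    push_cast
    ring

lemma shiftPoly_eq (g : ℂ[X]) (n : ℕ) : shiftPoly g n = aeval shiftOp g (X ^ n) := by
  apply Polynomial.funext
  intro z
  rw [aeval_eq_sum_range]
  simp [shiftPoly, eval_finsetSum, shiftOp_pow_eval, LinearMap.sum_apply]

/-- `f` is nonconstant and all its roots have real part `c`. -/
def GoodLine (c : ℝ) (f : ℂ[X]) : Prop :=
  0 < f.natDegree ∧ ∀ z : ℂ, f.eval z = 0 → z.re = c

lemma norm_eval_eq (f : ℂ[X]) (z : ℂ) :
    ‖f.eval z‖ = ‖f.leadingCoeff‖ * (f.roots.map fun r => ‖z - r‖).prod := by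
  have h := (IsAlgClosed.splits f).eq_prod_roots
  conv_lhs => rw [h]
  rw [eval_mul, eval_C, norm_mul, eval_multiset_prod, Multiset.map_map]
  congr 1
  generalize f.roots = s
  induction s using Multiset.induction_on with
  | empty => simp
  | cons a s ih => simp_all

lemma prod_lt (s : Multiset ℂ) (c : ℝ) (hs : ∀ r ∈ s, r.re = c) (h0 : s ≠ 0) (u v : ℂ)
    (huv : ∀ r : ℂ, r.re = c → ‖u - r‖ < ‖v - r‖) :
    (s.map fun r => ‖u - r‖).prod < (s.map fun r => ‖v - r‖).prod := by
  induction s using Multiset.induction_on with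
  | empty => exact absurd rfl h0
  | cons a s ih =>
    have ha := huv a (hs a (by simp))
    simp only [Multiset.map_cons, Multiset.prod_cons]
    have hnn : 0 ≤ (s.map fun r => ‖u - r‖).prod := by
      apply Multiset.prod_nonneg
      intro x hx
      obtain ⟨r, _, rfl⟩ := Multiset.mem_map.1 hx
      exact norm_nonneg _
    by_cases h : s = 0
    · subst h; simpa using ha
    · have h1 := ih (fun r hr => hs r (by simp [hr])) h
      exact mul_lt_mul'' ha h1 (norm_nonneg _) hnn

lemma GoodLine.eval_lt {c : ℝ} {f : ℂ[X]} (hf : GoodLine c f) (u v : ℂ)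
    (huv : ∀ r : ℂ, r.re = c → ‖u - r‖ < ‖v - r‖) : ‖f.eval u‖ < ‖f.eval v‖ := by
  have hf0 : f ≠ 0 := by
    rintro rfl
    simpa using hf.1
  rw [norm_eval_eq, norm_eval_eq]
  refine mul_lt_mul_of_pos_left (prod_lt _ c ?_ ?_ u v huv) ?_
  · intro r hr
    exact hf.2 r (isRoot_of_mem_roots hr)
  · intro h
    have h2 := (IsAlgClosed.splits f).natDegree_eq_card_roots
    rw [h] at h2
    have := hf.1
    simp at h2
    omega
  · simpa using hf0

lemma norm_sub_lt {u v r : ℂ} (him : u.im = v.im)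
    (h : (u.re - r.re) ^ 2 < (v.re - r.re) ^ 2) : ‖u - r‖ < ‖v - r‖ := by
  refine lt_of_pow_lt_pow_left₀ 2 (norm_nonneg _) ?_
  rw [← Complex.normSq_eq_norm_sq, ← Complex.normSq_eq_norm_sq, Complex.normSq_apply,
    Complex.normSq_apply]
  simp only [Complex.sub_re, Complex.sub_im, him]
  nlinarith

lemma GoodLine.step {c : ℝ} {f : ℂ[X]} (hf : GoodLine c f) (w : ℂ) (hw : ‖w‖ = 1)
    (hw1 : w ≠ 1) : GoodLine (c + 1 / 2) (aeval shiftOp (X - C w) f) := by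
  have he : aeval shiftOp (X - C w) f = shiftOp f - C w * f := by
    simp [Module.algebraMap_end_apply, smul_eq_C_mul]
  have hf0 : f ≠ 0 := by
    rintro rfl
    simpa using hf.1
  rw [he]
  constructor
  · refine lt_of_lt_of_le hf.1 (le_natDegree_of_ne_zero ?_)
    have h1 : (shiftOp f).coeff f.natDegree = f.leadingCoeff := by
      have := leadingCoeff_taylor (f := f) (r := (-1 : ℂ))
      rw [leadingCoeff, natDegree_taylor] at this
      exact this
    rw [coeff_sub, h1, coeff_C_mul, coeff_natDegree]
    have : f.leadingCoeff - w * f.leadingCoeff = (1 - w) * f.leadingCoeff := by ring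
    rw [this]
    exact mul_ne_zero (sub_ne_zero.2 hw1.symm) (by simpa using hf0)
  · intro z hz
    rw [eval_sub, shiftOp_eval, eval_mul, eval_C, sub_eq_zero] at hz
    have hn : ‖f.eval (z - 1)‖ = ‖f.eval z‖ := by rw [hz, norm_mul, hw, one_mul]
    rcases lt_trichotomy z.re (c + 1 / 2) with h | h | h
    · exfalso
      refine (hf.eval_lt z (z - 1) ?_).ne hn.symm
      intro r hr
      refine norm_sub_lt (by simp) ?_
      simp only [Complex.sub_re, Complex.one_re, hr]
      nlinarith
    · exact h
    · exfalso
      refine (hf.eval_lt (z - 1) z ?_).ne hn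
      intro r hr
      refine norm_sub_lt (by simp) ?_
      simp only [Complex.sub_re, Complex.one_re, hr]
      nlinarith

lemma GoodLine.shift {c : ℝ} {f : ℂ[X]} (hf : GoodLine c f) :
    GoodLine (c + 1) (aeval shiftOp (X : ℂ[X]) f) := by
  rw [aeval_X]
  constructor
  · have := natDegree_taylor f (-1 : ℂ)
    exact this.symm ▸ hf.1
  · intro z hz
    rw [shiftOp_eval] at hz
    have := hf.2 _ hz
    simp at this
    linarith

lemma GoodLine.multiset {c : ℝ} {f : ℂ[X]} (hf : GoodLine c f) (s : Multiset ℂ)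
    (hs : ∀ w ∈ s, ‖w‖ = 1 ∧ w ≠ 1) :
    GoodLine (c + s.card / 2) (aeval shiftOp (s.map fun w => X - C w).prod f) := by
  induction s using Multiset.induction_on with
  | empty => simpa using hf
  | cons a s ih =>
    rw [Multiset.map_cons, Multiset.prod_cons, map_mul, Module.End.mul_apply]
    have h1 := (ih fun w hw => hs w (by simp [hw])).step a (hs a (by simp)).1 (hs a (by simp)).2
    convert h1 using 1
    simp only [Multiset.card_cons]
    push_cast
    ring

/-- `g` is monic and its roots are on the unit circle and different from `1`. -/
def CircPoly (g : ℂ[X]) : Prop := g.Monic ∧ ∀ w : ℂ, g.eval w = 0 → ‖w‖ = 1 ∧ w ≠ 1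

lemma CircPoly.mul {g h : ℂ[X]} (hg : CircPoly g) (hh : CircPoly h) : CircPoly (g * h) := by
  refine ⟨hg.1.mul hh.1, fun w hw => ?_⟩
  rw [eval_mul, mul_eq_zero] at hw
  exact hw.elim (hg.2 w) (hh.2 w)

lemma CircPoly.pow {g : ℂ[X]} (hg : CircPoly g) (n : ℕ) : CircPoly (g ^ n) := by
  refine ⟨hg.1.pow n, fun w hw => ?_⟩
  rw [eval_pow] at hw
  exact hg.2 w (eq_zero_of_pow_eq_zero hw)

lemma GoodLine.apply {c : ℝ} {f g : ℂ[X]} (hf : GoodLine c f) (hg : CircPoly g) :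
    GoodLine (c + g.natDegree / 2) (aeval shiftOp g f) := by
  have hs := IsAlgClosed.splits g
  have h := hf.multiset g.roots fun w hw => hg.2 w (isRoot_of_mem_roots hw)
  have he := hs.eq_prod_roots
  rw [hg.1.leadingCoeff, C_1, one_mul] at he
  rw [← he, ← hs.natDegree_eq_card_roots] at h
  exact h

lemma phiC_monic (m : ℕ) : (phiC (m + 1)).Monic :=
  monic_geom_sum_X (Nat.succ_ne_zero m)

lemma phiC_natDegree (m : ℕ) : (phiC (m + 1)).natDegree = m := by
  have h : phiC (m + 1) * (X - C 1) = X ^ (m + 1) - C 1 := by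
    simpa [phiC] using geom_sum_mul (X : ℂ[X]) (m + 1)
  have h2 := congrArg natDegree h
  rw [(phiC_monic m).natDegree_mul (monic_X_sub_C 1), natDegree_X_sub_C,
    natDegree_X_pow_sub_C] at h2
  omega

lemma phiC_circ (m : ℕ) : CircPoly (phiC (m + 1)) := by
  refine ⟨phiC_monic m, fun w hw => ?_⟩
  have hw' : ∑ i ∈ Finset.range (m + 1), w ^ i = 0 := by
    simpa [phiC, eval_finsetSum] using hw
  constructor
  · have h := geom_sum_mul w (m + 1)
    rw [hw', zero_mul] at h
    exact Complex.norm_eq_one_of_pow_eq_one (sub_eq_zero.1 h.symm) (Nat.succ_ne_zero m)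
  · rintro rfl
    simp at hw'
    exact Nat.cast_add_one_ne_zero m hw'

lemma phi2C_eq (m : ℕ) : phi2C m = expand ℂ 2 (phiC m) := by
  simp [phi2C, phiC, pow_mul]

lemma phi2C_natDegree (m : ℕ) : (phi2C (m + 1)).natDegree = 2 * m := by
  rw [phi2C_eq, natDegree_expand, phiC_natDegree, mul_comm]

lemma phi2C_circ (m : ℕ) : CircPoly (phi2C (m + 1)) := by
  rw [phi2C_eq]
  refine ⟨(phiC_monic m).expand (by norm_num), fun w hw => ?_⟩
  rw [expand_eval] at hw
  obtain ⟨h1, h2⟩ := (phiC_circ m).2 _ hw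
  constructor
  · rw [norm_pow] at h1
    exact (pow_eq_one_iff_of_nonneg (norm_nonneg w) (by norm_num)).1 h1
  · rintro rfl
    simp at h2

lemma goodLine_X_pow (n : ℕ) (hn : 2 ≤ n) : GoodLine 0 ((X : ℂ[X]) ^ n) := by
  constructor
  · rw [natDegree_X_pow]; omega
  · intro z hz
    rw [eval_pow, eval_X] at hz
    rw [eq_zero_of_pow_eq_zero hz, Complex.zero_re]

/-- the "Riemann hypothesis" for the extended Linial arrangement of
type `BC_n`. With `g = y (1 + y^2 + ... + y^(2a))^n (1 + y^2 + ... + y^(a-1))` for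
odd `a` and `g = (1 + y^2 + ... + y^(2a))^n (1 + y + ... + y^a)` for even `a`,
every complex root of `∑_k g_k (X - k)^n` has real part `na + (a+1)/2` resp.
`na + a/2`. -/
theorem statement19 (n a : ℕ) (hn : 2 ≤ n) (ha : 1 ≤ a) :
    (Odd a → ∀ z : ℂ,
      (shiftPoly (X * (phi2C (a + 1)) ^ n * phi2C ((a + 1) / 2)) n).eval z = 0 →
      z.re = (n : ℝ) * (a : ℝ) + ((a : ℝ) + 1) / 2) ∧
    (Even a → ∀ z : ℂ,
      (shiftPoly ((phi2C (a + 1)) ^ n * phiC (a + 1)) n).eval z = 0 →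
      z.re = (n : ℝ) * (a : ℝ) + (a : ℝ) / 2) := by
  constructor
  · rintro ⟨b, rfl⟩ z hz
    have hb : (2 * b + 1 + 1) / 2 = b + 1 := by omega
    rw [hb, mul_assoc, shiftPoly_eq, map_mul, Module.End.mul_apply] at hz
    have hc := ((phi2C_circ (2 * b + 1)).pow n).mul (phi2C_circ b)
    have := (((goodLine_X_pow n hn).apply hc).shift).2 z hz
    rw [this, (((phi2C_circ (2 * b + 1)).pow n).1).natDegree_mul (phi2C_circ b).1,
      (phi2C_circ (2 * b + 1)).1.natDegree_pow, phi2C_natDegree, phi2C_natDegree]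
    push_cast
    ring
  · intro _ z hz
    rw [shiftPoly_eq] at hz
    have hc := ((phi2C_circ a).pow n).mul (phiC_circ a)
    have := ((goodLine_X_pow n hn).apply hc).2 z hz
    rw [this, (((phi2C_circ a).pow n).1).natDegree_mul (phiC_circ a).1,
      (phi2C_circ a).1.natDegree_pow, phi2C_natDegree, phiC_natDegree]
    push_cast
    ring
end
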